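/- arXiv:2605.08096 — 2 statements merged into one kernel-verified Lean document; each statement's English description precedes it below -/
import Mathlib

section
/- Let 𝔽 be a field of characteristic zero, let k, n_1, …, n_k ≥ 1 be integers, and let Φ : M_{n_1}(𝔽) ⊕ ⋯ ⊕ M_{n_k}(𝔽) → M_{n_1}(𝔽) ⊕ ⋯ ⊕ M_{n_k}(𝔽) be an additive surjection. Then the following are equivalent: (i) Φ maps singular (non-invertible) elements to singular elements; (ii) there exists a permutation π of {1,…,k} with n_{π(i)} = n_i for all i such that Φ maps the i-th block M_{n_i}(𝔽) (embedded with zeros elsewhere) onto the π(i)-th block, and moreover, for each i with n_i ≥ 2 there exist a field endomorphism σ_i : 𝔽 → 𝔽 and invertible matrices P_i, Q_i ∈ M_{n_i}(𝔽) such that the induced map on the i-th block is either A ↦ P_i σ_i(A) Q_i or A ↦ P_i σ_i(Aᵀ) Q_i, where σ_i is applied entrywise. -/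
open Matrix

/-- The block-diagonal matrix algebra `M_{n 0}(𝔽) ⊕ ⋯ ⊕ M_{n (k-1)}(𝔽)`. -/
abbrev BlockAlg (𝔽 : Type*) [Field 𝔽] (k : ℕ) (n : Fin k → ℕ) :=
  ∀ i : Fin k, Matrix (Fin (n i)) (Fin (n i)) 𝔽

/-- The `i`-th block: elements whose components other than the `i`-th vanish. -/
def blockSet {𝔽 : Type*} [Field 𝔽] {k : ℕ} {n : Fin k → ℕ} (i : Fin k) :
    Set (BlockAlg 𝔽 k n) :=
  {a | ∀ j, j ≠ i → a j = 0}

/-- The embedding of `M_{n i}(𝔽)` as the `i`-th block (zeros elsewhere). -/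
def blockEmbed {𝔽 : Type*} [Field 𝔽] {k : ℕ} {n : Fin k → ℕ} (i : Fin k)
    (A : Matrix (Fin (n i)) (Fin (n i)) 𝔽) : BlockAlg 𝔽 k n :=
  Function.update 0 i A

theorem poly_lemma {F J : Type*} [Field F] [CharZero F] [Fintype J] [DecidableEq J]
    (p : MvPolynomial J F) (m : ℕ)
    (h : (MvPolynomial.aeval (fun _ : J => (Polynomial.X : Polynomial F)) p).coeff m ≠ 0) :
    ∃ T : Finset J, T.card ≤ m ∧ ∃ t : J → ℕ, (∀ a, a ∉ T → t a = 0) ∧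
      MvPolynomial.eval (fun a => (t a : F)) p ≠ 0 := by
  have h1 : ∃ d ∈ p.support, ∑ a, d a = m := by
    by_contra hc
    push Not at hc
    apply h
    rw [MvPolynomial.aeval_def, MvPolynomial.eval₂_eq', Polynomial.finsetSum_coeff]
    refine Finset.sum_eq_zero fun d hd => ?_
    rw [Finset.prod_pow_eq_pow_sum]
    rw [Polynomial.algebraMap_apply, Polynomial.coeff_C_mul_X_pow]
    simp [(hc d hd).symm]
  obtain ⟨d, hd, hdm⟩ := h1
  refine ⟨d.support, ?_, ?_⟩
  · rw [← hdm, Finset.card_eq_sum_ones]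
    calc ∑ a ∈ d.support, 1 ≤ ∑ a ∈ d.support, d a :=
          Finset.sum_le_sum fun a ha => Nat.one_le_iff_ne_zero.2 (by simpa using ha)
      _ ≤ _ := Finset.sum_le_sum_of_subset (Finset.subset_univ _)
  · set g : J → MvPolynomial J F := fun a => if a ∈ d.support then MvPolynomial.X a else 0 with hg
    have hq : MvPolynomial.aeval g p ≠ 0 := by
      intro h0
      have h2 := congrArg (MvPolynomial.coeff d) h0
      rw [MvPolynomial.aeval_def, MvPolynomial.eval₂_eq', MvPolynomial.coeff_sum,
        Finset.sum_eq_single d] at h2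
      · have : ∏ i, g i ^ d i = MvPolynomial.monomial d 1 := by
          rw [MvPolynomial.monomial_eq, Finsupp.prod_fintype _ _ (by simp)]
          simp only [map_one, one_mul]
          refine Finset.prod_congr rfl fun a _ => ?_
          by_cases ha : d a = 0 <;> simp [hg, ha]
        rw [this] at h2
        rw [MvPolynomial.algebraMap_eq, MvPolynomial.coeff_C_mul, MvPolynomial.coeff_monomial] at h2
        simp at h2
        exact (MvPolynomial.mem_support_iff.1 hd) h2
      · intro d' _ hne
        rw [MvPolynomial.algebraMap_eq, MvPolynomial.coeff_C_mul]
        by_cases hs : ∃ a, d' a ≠ 0 ∧ d a = 0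
        · obtain ⟨a, ha, ha'⟩ := hs
          rw [Finset.prod_eq_zero (Finset.mem_univ a)]
          · simp
          · simp [hg, ha, ha']
        · push Not at hs
          have : ∏ i, g i ^ d' i = MvPolynomial.monomial d' 1 := by
            rw [MvPolynomial.monomial_eq, Finsupp.prod_fintype _ _ (by simp)]
            simp only [map_one, one_mul]
            refine Finset.prod_congr rfl fun a _ => ?_
            by_cases ha : d' a = 0
            · simp [ha]
            · simp [hg, hs a ha]
          rw [this, MvPolynomial.coeff_monomial, if_neg hne]
          simp
      · intro hn; exact absurd hd hn
    have h3 : ∃ t : J → ℕ, MvPolynomial.eval (fun a => (t a : F)) (MvPolynomial.aeval g p) ≠ 0 := by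
      by_contra hc
      push Not at hc
      apply hq
      refine MvPolynomial.funext_set (fun _ => Set.range (Nat.cast : ℕ → F))
        (fun _ => Set.infinite_range_of_injective Nat.cast_injective) ?_
      intro x hx
      have : ∀ a, ∃ t : ℕ, (t : F) = x a := fun a => hx a (Set.mem_univ a)
      choose t ht using this
      have := hc t
      rw [funext ht] at this
      simpa using this
    obtain ⟨t, ht⟩ := h3
    refine ⟨fun a => if a ∈ d.support then t a else 0, fun a ha => by simp only [if_neg ha], ?_⟩
    convert ht using 1
    change _ = ((MvPolynomial.eval (fun a => (t a : F))).comp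
      (MvPolynomial.aeval g : MvPolynomial J F →ₐ[F] MvPolynomial J F).toRingHom) p
    congr 1
    apply MvPolynomial.ringHom_ext
    · intro r; simp
    · intro a
      by_cases ha : d a = 0 <;> simp [hg, ha]

theorem diag_form {F m : Type*} [Field F] [Fintype m] [DecidableEq m] (Y : Matrix m m F) :
    ∃ (L L' : Matrix m m F) (D : m → F), L.det = 1 ∧ L'.det = 1 ∧ Y = L * diagonal D * L' := by
  obtain ⟨L, L', D, h⟩ := Matrix.Pivot.exists_list_transvec_mul_diagonal_mul_list_transvec Y
  exact ⟨_, _, D, TransvectionStruct.det_toMatrix_prod L, TransvectionStruct.det_toMatrix_prod L', h⟩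

theorem det_prop_cols {F m : Type*} [Field F] [Fintype m] [DecidableEq m] (A : Matrix m m F)
    (v w : m → F) (b c : m) (hbc : b ≠ c) (hb : ∀ r, A r b = v r * w b)
    (hc : ∀ r, A r c = v r * w c) : A.det = 0 := by
  by_cases h : w b = 0
  · exact Matrix.det_eq_zero_of_column_eq_zero b (fun r => by rw [hb, h, mul_zero])
  · refine Matrix.exists_mulVec_eq_zero_iff.1 ⟨Pi.single b (w c) - Pi.single c (w b), ?_, ?_⟩
    · intro h0
      have := congrFun h0 c
      simp [hbc.symm, h] at this
    · rw [Matrix.mulVec_sub]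
      ext r
      simp [hb, hc]
      ring

theorem blockEmbed_same {𝔽 : Type*} [Field 𝔽] {k : ℕ} {n : Fin k → ℕ} (i : Fin k)
    (A : Matrix (Fin (n i)) (Fin (n i)) 𝔽) : (blockEmbed i A : BlockAlg 𝔽 k n) i = A := by
  simp [blockEmbed]

theorem blockEmbed_ne {𝔽 : Type*} [Field 𝔽] {k : ℕ} {n : Fin k → ℕ} {i j : Fin k} (h : j ≠ i)
    (A : Matrix (Fin (n i)) (Fin (n i)) 𝔽) : (blockEmbed i A : BlockAlg 𝔽 k n) j = 0 := by
  simp [blockEmbed, h]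

theorem blockEmbed_sum {𝔽 : Type*} [Field 𝔽] {k : ℕ} {n : Fin k → ℕ}
    (a : BlockAlg 𝔽 k n) : ∑ i, blockEmbed i (a i) = a :=
  Finset.univ_sum_single a

theorem isUnit_iff_det {𝔽 : Type*} [Field 𝔽] {k : ℕ} {n : Fin k → ℕ}
    (a : BlockAlg 𝔽 k n) : IsUnit a ↔ ∀ i, (a i).det ≠ 0 := by
  rw [Pi.isUnit_iff]
  simp [Matrix.isUnit_iff_isUnit_det]

/-- The atom: the single column `a.2` of the block `a.1` of `B`. -/
def atomOf {𝔽 : Type*} [Field 𝔽] {k : ℕ} {n : Fin k → ℕ} (B : BlockAlg 𝔽 k n)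
    (a : Σ i : Fin k, Fin (n i)) : BlockAlg 𝔽 k n :=
  blockEmbed a.1 (Matrix.of fun r c => if c = a.2 then B a.1 r c else 0)

theorem atomOf_apply_ne {𝔽 : Type*} [Field 𝔽] {k : ℕ} {n : Fin k → ℕ} (B : BlockAlg 𝔽 k n)
    (a : Σ i : Fin k, Fin (n i)) (l : Fin k) (r c : Fin (n l)) (h : a ≠ ⟨l, c⟩) :
    atomOf B a l r c = 0 := by
  obtain ⟨i, b⟩ := a
  by_cases hl : l = i
  · subst hl
    have : c ≠ b := fun hcb => h (by rw [hcb])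
    simp [atomOf, blockEmbed_same, this]
  · simp [atomOf, blockEmbed_ne hl]

theorem atomOf_sum {𝔽 : Type*} [Field 𝔽] {k : ℕ} {n : Fin k → ℕ} (B : BlockAlg 𝔽 k n) :
    ∑ a, atomOf B a = B := by
  funext l
  ext r c
  rw [Finset.sum_apply, Matrix.sum_apply, Finset.sum_eq_single ⟨l, c⟩]
  · simp [atomOf, blockEmbed_same]
  · intro a _ h
    exact atomOf_apply_ne B a l r c h
  · simp

theorem key {𝔽 : Type*} [Field 𝔽] [CharZero 𝔽] {k : ℕ} {n : Fin k → ℕ}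
    (Φ : BlockAlg 𝔽 k n →+ BlockAlg 𝔽 k n) (hsurj : Function.Surjective Φ)
    (hsing : ∀ a, ¬ IsUnit a → ¬ IsUnit (Φ a)) (i : Fin k) (v w : Fin (n i) → 𝔽) :
    (∀ j l, j ≠ l → Φ (blockEmbed i (vecMulVec v w)) j = 0 ∨
      Φ (blockEmbed i (vecMulVec v w)) l = 0) ∧
    ∀ j, ∃ p q, Φ (blockEmbed i (vecMulVec v w)) j = vecMulVec p q := by
  classical
  set X : BlockAlg 𝔽 k n := blockEmbed i (vecMulVec v w) with hX
  set Y := Φ X with hY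
  choose L L' D hL hL' hYD using fun j => diag_form (Y j)
  set J := Σ i : Fin k, Fin (n i)
  -- at most one nonzero diagonal entry
  have main : ∀ a b : J, D a.1 a.2 ≠ 0 → D b.1 b.2 ≠ 0 → a = b := by
    intro a0 b0 ha0 hb0
    by_contra hab
    let D' : ∀ j, Fin (n j) → 𝔽 := fun j b => if D j b = 0 then 1 else 0
    let C : BlockAlg 𝔽 k n := fun j => L j * diagonal (D' j) * L' j
    obtain ⟨B, hB⟩ := hsurj C
    let Z : J → BlockAlg 𝔽 k n := fun a => Φ (atomOf B a)
    have hZ : ∑ a, Z a = C := by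
      rw [← hB, ← map_sum, atomOf_sum]
    let p : MvPolynomial J 𝔽 := ∏ j, Matrix.det
      ((Y j).map MvPolynomial.C +
        ∑ a, (MvPolynomial.X a : MvPolynomial J 𝔽) • (Z a j).map MvPolynomial.C)
    let S : Finset J := Finset.univ.filter fun a => D a.1 a.2 = 0
    have hp1 : ∀ t : J → 𝔽, MvPolynomial.eval t p = ∏ j, (Y j + ∑ a, t a • Z a j).det := by
      intro t
      simp only [p, map_prod, RingHom.map_det]
      refine Finset.prod_congr rfl fun j _ => ?_
      congr 1
      ext r c
      simp [Matrix.sum_apply]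
    have hp2 : MvPolynomial.aeval (fun _ : J => (Polynomial.X : Polynomial 𝔽)) p =
        ∏ a : J, (if D a.1 a.2 = 0 then Polynomial.X else Polynomial.C (D a.1 a.2)) := by
      have e : ∀ j, (MvPolynomial.aeval (fun _ : J => (Polynomial.X : Polynomial 𝔽))) (Matrix.det
          ((Y j).map MvPolynomial.C +
          ∑ a, (MvPolynomial.X a : MvPolynomial J 𝔽) • (Z a j).map MvPolynomial.C)) =
          ∏ b, (if D j b = 0 then Polynomial.X else Polynomial.C (D j b)) := by
        intro j
        rw [AlgHom.map_det]
        have e1 : (MvPolynomial.aeval (fun _ : J => (Polynomial.X : Polynomial 𝔽))).mapMatrix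
            ((Y j).map MvPolynomial.C +
            ∑ a, (MvPolynomial.X a : MvPolynomial J 𝔽) • (Z a j).map MvPolynomial.C) =
            (L j).map Polynomial.C * diagonal
              (fun b => if D j b = 0 then Polynomial.X else Polynomial.C (D j b)) *
              (L' j).map Polynomial.C := by
          have e2 : (MvPolynomial.aeval (fun _ : J => (Polynomial.X : Polynomial 𝔽))).mapMatrix
            ((Y j).map MvPolynomial.C +
            ∑ a, (MvPolynomial.X a : MvPolynomial J 𝔽) • (Z a j).map MvPolynomial.C) =
            (Y j).map Polynomial.C + (Polynomial.X : Polynomial 𝔽) • (C j).map Polynomial.C := by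
            rw [← hZ]
            ext1 r c
            simp [Matrix.sum_apply, Finset.mul_sum]
          have e3 : diagonal (fun b => if D j b = 0 then Polynomial.X else Polynomial.C (D j b))
              = (diagonal (D j)).map Polynomial.C +
                (Polynomial.X : Polynomial 𝔽) • (diagonal (D' j)).map Polynomial.C := by
            ext1 r c
            by_cases hrc : r = c
            · subst hrc
              by_cases hd : D j r = 0 <;> simp [D', hd]
            · simp [hrc]
          rw [e2, e3, hYD j]
          simp only [C, Matrix.map_mul, Matrix.mul_add, Matrix.add_mul, Matrix.mul_smul,
            Matrix.smul_mul]
        rw [e1, Matrix.det_mul, Matrix.det_mul, Matrix.det_diagonal]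
        have h1 : ((L j).map Polynomial.C).det = 1 := by
          have := RingHom.map_det (Polynomial.C : 𝔽 →+* _) (L j)
          rw [hL j, map_one] at this
          exact this.symm
        have h2 : ((L' j).map Polynomial.C).det = 1 := by
          have := RingHom.map_det (Polynomial.C : 𝔽 →+* _) (L' j)
          rw [hL' j, map_one] at this
          exact this.symm
        rw [h1, h2, one_mul, mul_one]
      simp only [p, map_prod]
      rw [Fintype.prod_sigma]
      exact Finset.prod_congr rfl fun j _ => e j
    have hp3 : (MvPolynomial.aeval (fun _ : J => (Polynomial.X : Polynomial 𝔽)) p).coeff S.card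
        ≠ 0 := by
      rw [hp2, Finset.prod_ite, Finset.prod_const, ← map_prod, mul_comm]
      rw [Polynomial.coeff_C_mul_X_pow, if_pos rfl, Finset.prod_ne_zero_iff]
      intro a ha
      simpa using ha
    obtain ⟨T, hT, t, ht0, ht⟩ := poly_lemma p S.card hp3
    -- the complement of T has two elements
    have hcard : 2 ≤ (Finset.univ \ T).card := by
      have h1 : ({a0, b0} : Finset J) ⊆ Finset.univ \ S := by
        intro x hx
        simp only [Finset.mem_insert, Finset.mem_singleton] at hx
        rcases hx with rfl | rfl <;> simp [S, ha0, hb0]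
      have h2 := Finset.card_le_card h1
      rw [Finset.card_pair hab] at h2
      rw [Finset.card_sdiff_of_subset (Finset.subset_univ _)] at h2 ⊢
      omega
    obtain ⟨a, ha, b, hb, hne⟩ := Finset.one_lt_card.1 (show 1 < _ from hcard)
    have ha : a ∉ T := by simpa using ha
    have hb : b ∉ T := by simpa using hb
    -- the element
    set W : BlockAlg 𝔽 k n := X + ∑ a, t a • atomOf B a with hW
    have hΦW : Φ W = Y + ∑ a, t a • Z a := by
      simp only [hW, map_add, map_sum, map_nsmul, Z, hY]
    have hunit : IsUnit (Φ W) := by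
      rw [isUnit_iff_det]
      intro j
      rw [hp1, Finset.prod_ne_zero_iff] at ht
      have := ht j (Finset.mem_univ _)
      rw [hΦW]
      convert this using 2
      rw [Pi.add_apply, Finset.sum_apply]
      congr 1
      refine Finset.sum_congr rfl fun a _ => ?_
      rw [Pi.smul_apply, Nat.cast_smul_eq_nsmul]
    have hWcol : ∀ a : J, a ∉ T → ∀ r, W a.1 r a.2 = X a.1 r a.2 := by
      intro a ha r
      rw [hW, Pi.add_apply, Matrix.add_apply, Finset.sum_apply, Matrix.sum_apply,
        Finset.sum_eq_zero, add_zero]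
      intro c _
      by_cases hca : c = a
      · subst hca; simp [ht0 c ha]
      · rw [Pi.smul_apply, Matrix.smul_apply, atomOf_apply_ne B c a.1 r a.2 hca, smul_zero]
    have hWunit : IsUnit W := by
      by_contra h
      exact hsing W h hunit
    rw [isUnit_iff_det] at hWunit
    have hin : ∀ a : J, a ∉ T → a.1 = i := by
      intro a ha
      by_contra hai
      refine hWunit a.1 (Matrix.det_eq_zero_of_column_eq_zero a.2 fun r => ?_)
      rw [hWcol a ha, hX, blockEmbed_ne hai]; rfl
    obtain ⟨i1, b1⟩ := a
    obtain ⟨i2, b2⟩ := b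
    have h1 := hin _ ha
    have h2 := hin _ hb
    simp only at h1 h2
    subst h1
    subst h2
    refine hWunit _ (det_prop_cols (W _) v w b1 b2 (fun h => hne (by rw [h])) ?_ ?_)
    · intro r
      rw [hWcol _ ha, hX, blockEmbed_same]; rfl
    · intro r
      rw [hWcol _ hb, hX, blockEmbed_same]; rfl
  have hzero : ∀ j, (∀ b, D j b = 0) → Y j = 0 := by
    intro j hj
    rw [hYD j, show D j = 0 from funext hj]
    simp
  constructor
  · intro j l hjl
    by_contra hc
    push Not at hc
    have h1 : ∃ b, D j b ≠ 0 := by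
      by_contra h; push Not at h; exact hc.1 (hzero j h)
    have h2 : ∃ b, D l b ≠ 0 := by
      by_contra h; push Not at h; exact hc.2 (hzero l h)
    obtain ⟨b, hb⟩ := h1
    obtain ⟨c, hc⟩ := h2
    have := main ⟨j, b⟩ ⟨l, c⟩ hb hc
    exact hjl (congrArg Sigma.fst this)
  · intro j
    by_cases h : ∃ b, D j b ≠ 0
    · obtain ⟨b, hb⟩ := h
      refine ⟨fun r => L j r b * D j b, fun c => L' j b c, ?_⟩
      rw [hYD j]
      ext r c
      rw [Matrix.mul_apply, Finset.sum_eq_single b]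
      · simp [vecMulVec_apply]
      · intro c' _ hc'
        have : D j c' = 0 := by
          by_contra h0
          have := main ⟨j, c'⟩ ⟨j, b⟩ h0 hb
          exact hc' (eq_of_heq (Sigma.mk.inj this).2)
        simp [this]
      · simp
    · push Not at h
      refine ⟨0, 0, ?_⟩
      rw [hzero j h]
      ext r c
      simp [vecMulVec_apply]

/-- Additive maps that send rank-one matrices to matrices with vanishing `2 × 2` minors. -/
def MinorPres {F m : Type*} [Field F] (Ψ : Matrix m m F →+ Matrix m m F) : Prop :=
  ∀ (v w : m → F) (i j k l : m),
    Ψ (vecMulVec v w) i k * Ψ (vecMulVec v w) j l = Ψ (vecMulVec v w) i l * Ψ (vecMulVec v w) j k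

theorem vmv_single {F m : Type*} [Field F] [DecidableEq m] (i j : m) (x y : F) :
    vecMulVec (Pi.single i x) (Pi.single j y) = Matrix.single i j (x * y) := by
  ext a b
  simp only [vecMulVec_apply, Matrix.single_apply, Pi.single_apply]
  by_cases h1 : i = a <;> by_cases h2 : j = b <;> simp [h1, h2, eq_comm]

section single_block

set_option linter.unusedSectionVars false

variable {F m : Type*} [Field F] [CharZero F] [Fintype m] [DecidableEq m]

theorem row_cond {Ψ : Matrix m m F →+ Matrix m m F} (hM : MinorPres Ψ)
    (i j : m) (x y : F) (a b c d : m) :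
    (Ψ (single i i x) + Ψ (single i j y)) a c * (Ψ (single i i x) + Ψ (single i j y)) b d =
    (Ψ (single i i x) + Ψ (single i j y)) a d * (Ψ (single i i x) + Ψ (single i j y)) b c := by
  have := hM (Pi.single i 1) (Pi.single i x + Pi.single j y) a b c d
  simpa only [vecMulVec_add, vmv_single, one_mul, map_add] using this

theorem row_cond' {Ψ : Matrix m m F →+ Matrix m m F} (hM : MinorPres Ψ)
    (i j l : m) (x y : F) (a b c d : m) :
    (Ψ (single i j x) + Ψ (single i l y)) a c * (Ψ (single i j x) + Ψ (single i l y)) b d =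
    (Ψ (single i j x) + Ψ (single i l y)) a d * (Ψ (single i j x) + Ψ (single i l y)) b c := by
  have := hM (Pi.single i 1) (Pi.single j x + Pi.single l y) a b c d
  simpa only [vecMulVec_add, vmv_single, one_mul, map_add] using this

theorem col_cond {Ψ : Matrix m m F →+ Matrix m m F} (hM : MinorPres Ψ)
    (i j : m) (x y : F) (a b c d : m) :
    (Ψ (single j j x) + Ψ (single i j y)) a c * (Ψ (single j j x) + Ψ (single i j y)) b d =
    (Ψ (single j j x) + Ψ (single i j y)) a d * (Ψ (single j j x) + Ψ (single i j y)) b c := by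
  have := hM (Pi.single j x + Pi.single i y) (Pi.single j 1) a b c d
  simpa only [add_vecMulVec, vmv_single, mul_one, map_add] using this

theorem sq_cond {Ψ : Matrix m m F →+ Matrix m m F} (hM : MinorPres Ψ)
    (i j : m) (x y z u : F) (a b c d : m) :
    (Ψ (single i i (x * z)) + Ψ (single i j (x * u)) + Ψ (single j i (y * z)) + Ψ (single j j (y * u))) a c *
    (Ψ (single i i (x * z)) + Ψ (single i j (x * u)) + Ψ (single j i (y * z)) + Ψ (single j j (y * u))) b d =
    (Ψ (single i i (x * z)) + Ψ (single i j (x * u)) + Ψ (single j i (y * z)) + Ψ (single j j (y * u))) a d *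
    (Ψ (single i i (x * z)) + Ψ (single i j (x * u)) + Ψ (single j i (y * z)) + Ψ (single j j (y * u))) b c := by
  have := hM (Pi.single i x + Pi.single j y) (Pi.single i z + Pi.single j u) a b c d
  rw [vecMulVec_add, add_vecMulVec, add_vecMulVec] at this
  simp only [vmv_single, map_add, Matrix.add_apply] at this ⊢
  linear_combination this

theorem psi_neg {Ψ : Matrix m m F →+ Matrix m m F} (i j : m) (x : F) :
    Ψ (single i j (-x)) = - Ψ (single i j x) := by
  rw [← map_neg, Matrix.single_neg]

theorem supp_row {Ψ : Matrix m m F →+ Matrix m m F} (hM : MinorPres Ψ)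
    (hE : ∀ i, Ψ (single i i 1) = single i i 1) (i j : m) (y : F) (a b : m) (ha : a ≠ i)
    (hb : b ≠ i) : Ψ (single i j y) a b = 0 := by
  have h1 := row_cond hM i j 1 y i a i b
  have h2 := row_cond hM i j 1 (-y) i a i b
  rw [psi_neg] at h2
  simp [hE, ha.symm, hb.symm] at h1 h2
  have : 2 * Ψ (single i j y) a b = 0 := by linear_combination h1 - h2
  simpa using this

theorem supp_col {Ψ : Matrix m m F →+ Matrix m m F} (hM : MinorPres Ψ)
    (hE : ∀ i, Ψ (single i i 1) = single i i 1) (i j : m) (y : F) (a b : m) (ha : a ≠ j)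
    (hb : b ≠ j) : Ψ (single i j y) a b = 0 := by
  have h1 := col_cond hM i j 1 y j a j b
  have h2 := col_cond hM i j 1 (-y) j a j b
  rw [psi_neg] at h2
  simp [hE, ha.symm, hb.symm] at h1 h2
  have : 2 * Ψ (single i j y) a b = 0 := by linear_combination h1 - h2
  simpa using this

/-- Off-diagonal units: only the entries `(i,j)` and `(j,i)` of the image may be nonzero. -/
theorem supp_off {Ψ : Matrix m m F →+ Matrix m m F} (hM : MinorPres Ψ)
    (hE : ∀ i, Ψ (single i i 1) = single i i 1) (i j : m) (hij : i ≠ j) (y : F) (a b : m)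
    (h : ¬ (a = i ∧ b = j)) (h' : ¬ (a = j ∧ b = i)) : Ψ (single i j y) a b = 0 := by
  by_cases h1 : a ≠ i ∧ b ≠ i
  · exact supp_row hM hE i j y a b h1.1 h1.2
  · by_cases h2 : a ≠ j ∧ b ≠ j
    · exact supp_col hM hE i j y a b h2.1 h2.2
    · exfalso
      by_cases e1 : a = i <;> by_cases e2 : b = i <;> by_cases e3 : a = j <;> by_cases e4 : b = j <;>
        simp_all

theorem off_prod {Ψ : Matrix m m F →+ Matrix m m F} (hM : MinorPres Ψ)
    (hE : ∀ i, Ψ (single i i 1) = single i i 1) (i j : m) (hij : i ≠ j) (y : F) :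
    Ψ (single i j y) i j * Ψ (single i j y) j i = 0 := by
  have := row_cond hM i j 0 y i j i j
  simp at this
  rw [← this, supp_off hM hE i j hij y i i (by simp [hij]) (by simp [hij]), zero_mul]

theorem sq_one {Ψ : Matrix m m F →+ Matrix m m F} (hM : MinorPres Ψ)
    (hE : ∀ i, Ψ (single i i 1) = single i i 1) (i j : m) (hij : i ≠ j) :
    (Ψ (single i j 1) i j + Ψ (single j i 1) i j) * (Ψ (single i j 1) j i + Ψ (single j i 1) j i)
      = 1 := by
  have := sq_cond hM i j 1 1 1 1 i j i j
  have e1 := supp_off hM hE i j hij 1 i i (by simp [hij]) (by simp [hij])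
  have e2 := supp_off hM hE j i hij.symm 1 i i (by simp [hij]) (by simp [hij])
  have e3 := supp_off hM hE i j hij 1 j j (by simp [hij.symm]) (by simp [hij.symm])
  have e4 := supp_off hM hE j i hij.symm 1 j j (by simp [hij.symm]) (by simp [hij.symm])
  simp [hE, hij, hij.symm, e1, e2, e3, e4] at this
  exact this.symm

theorem type_symm {Ψ : Matrix m m F →+ Matrix m m F} (hM : MinorPres Ψ)
    (hE : ∀ i, Ψ (single i i 1) = single i i 1) (i j : m) (hij : i ≠ j)
    (h : Ψ (single i j 1) i j ≠ 0) : Ψ (single j i 1) j i ≠ 0 := by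
  intro h0
  have h1 := sq_one hM hE i j hij
  have h2 : Ψ (single i j 1) j i = 0 := (mul_eq_zero.1 (off_prod hM hE i j hij 1)).resolve_left h
  rw [h0, h2] at h1
  simp at h1

theorem type_or {Ψ : Matrix m m F →+ Matrix m m F} (hM : MinorPres Ψ)
    (hE : ∀ i, Ψ (single i i 1) = single i i 1) (i j : m) (hij : i ≠ j) :
    Ψ (single i j 1) i j ≠ 0 ∨ Ψ (single i j 1) j i ≠ 0 := by
  by_contra hc
  push Not at hc
  have h1 := sq_one hM hE i j hij
  rw [hc.1, hc.2, zero_add, zero_add, mul_comm, off_prod hM hE j i hij.symm 1] at h1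
  simp at h1

theorem type_row {Ψ : Matrix m m F →+ Matrix m m F} (hM : MinorPres Ψ)
    (hE : ∀ i, Ψ (single i i 1) = single i i 1) (i j l : m) (hij : i ≠ j) (hil : i ≠ l)
    (h : Ψ (single i j 1) i j ≠ 0) : Ψ (single i l 1) i l ≠ 0 := by
  by_cases hjl : j = l
  · subst hjl; exact h
  refine (type_or hM hE i l hil).resolve_right fun h' => ?_
  have := row_cond' hM i j l 1 1 i l j i
  have e1 := supp_off hM hE i j hij 1 i i (by simp [hij]) (by simp [hij])
  have e2 := supp_off hM hE i l hil 1 i i (by simp [hil]) (by simp [hil])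
  have e3 := supp_off hM hE i l hil 1 i j (by simp [hjl]) (by simp [hil])
  have e4 := supp_off hM hE i j hij 1 l i (by simp [hij]) (by simp [Ne.symm hjl])
  simp [e1, e2, e3, e4] at this
  tauto

theorem type_all {Ψ : Matrix m m F →+ Matrix m m F} (hM : MinorPres Ψ)
    (hE : ∀ i, Ψ (single i i 1) = single i i 1) (i0 j0 : m) (h0 : i0 ≠ j0)
    (h : Ψ (single i0 j0 1) i0 j0 ≠ 0) (i j : m) (hij : i ≠ j) : Ψ (single i j 1) i j ≠ 0 := by
  by_cases hi : i = i0
  · subst hi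
    exact type_row hM hE i j0 j h0 hij h
  · have h1 := type_row hM hE i0 j0 i h0 (Ne.symm hi) h
    have h2 := type_symm hM hE i0 i (Ne.symm hi) h1
    exact type_row hM hE i i0 j hi hij h2

/-- Everything is supported at its own entry. -/
theorem supp_all {Ψ : Matrix m m F →+ Matrix m m F} (hM : MinorPres Ψ)
    (hE : ∀ i, Ψ (single i i 1) = single i i 1)
    (hT : ∀ i j, i ≠ j → Ψ (single i j 1) i j ≠ 0) (i j : m) (y : F) (a b : m)
    (h : ¬ (a = i ∧ b = j)) : Ψ (single i j y) a b = 0 := by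
  have off : ∀ i j, i ≠ j → ∀ y, Ψ (single i j y) j i = 0 := by
    intro i j hij y
    have h1 := off_prod hM hE i j hij 1
    have h2 := off_prod hM hE i j hij y
    have h3 := off_prod hM hE i j hij (1 + y)
    rw [Matrix.single_add, map_add] at h3
    have h4 := (mul_eq_zero.1 h1).resolve_left (hT i j hij)
    simp only [Matrix.add_apply, h4, zero_add, add_mul, h2, add_zero] at h3
    exact (mul_eq_zero.1 h3).resolve_left (hT i j hij)
  by_cases hij : i = j
  · subst hij
    -- the diagonal case
    have hz : ∀ b, b ≠ i → Ψ (single i i y) i b = 0 ∧ Ψ (single i i y) b i = 0 := by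
      intro b hb
      have z1 := fun x => supp_off hM hE i b hb.symm x i i (by simp [hb.symm]) (by simp [hb.symm])
      have z2 := fun x => supp_off hM hE i b hb.symm x b b (by simp [hb]) (by simp [hb])
      have z3 := fun x => supp_off hM hE b i hb x i i (by simp [hb.symm]) (by simp [hb.symm])
      have z4 := fun x => supp_off hM hE b i hb x b b (by simp [hb]) (by simp [hb])
      have z5 := off i b hb.symm
      have z6 := off b i hb
      have z7 := supp_row hM hE i i y b b hb hb
      constructor
      · have f := fun t s => sq_cond hM i b (t * y) 1 s 1 i b i b
        have f1 := f 1 1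
        have f2 := f 1 (-1)
        have f3 := f (-1) 1
        have f4 := f (-1) (-1)
        simp [hE, z1, z2, z3, z4, z5, z6, z7, psi_neg, hb] at f1 f2 f3 f4
        have hb' := hT b i hb
        have : 2 * 2 * (Ψ (single b i 1) b i * Ψ (single i i y) i b) = 0 := by
          linear_combination -f1 - f2 + f3 + f4
        simpa [hb'] using this
      · have f := fun t s => sq_cond hM i b t 1 (s * y) 1 i b i b
        have f1 := f 1 1
        have f2 := f 1 (-1)
        have f3 := f (-1) 1
        have f4 := f (-1) (-1)
        simp [hE, z1, z2, z3, z4, z5, z6, z7, psi_neg, hb] at f1 f2 f3 f4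
        have hb' := hT i b hb.symm
        have : 2 * 2 * (Ψ (single i b 1) i b * Ψ (single i i y) b i) = 0 := by
          linear_combination -f1 + f2 - f3 + f4
        simpa [hb'] using this
    by_cases ha : a = i
    · subst ha
      exact (hz b (fun hb => h ⟨rfl, hb⟩)).1
    · by_cases hb : b = i
      · subst hb; exact (hz a ha).2
      · exact supp_row hM hE i i y a b ha hb
  · by_cases h' : a = j ∧ b = i
    · rw [h'.1, h'.2]; exact off i j hij y
    · exact supp_off hM hE i j hij y a b h h'

end single_block

section standard

variable {F m : Type*} [Field F] [CharZero F] [Fintype m] [DecidableEq m]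

theorem std_of_type {Ψ : Matrix m m F →+ Matrix m m F} (hM : MinorPres Ψ)
    (hE : ∀ i, Ψ (single i i 1) = single i i 1) (i0 j0 : m) (h0 : i0 ≠ j0)
    (h : Ψ (single i0 j0 1) i0 j0 ≠ 0) :
    ∃ (σ : F →+* F) (P Q : Matrix m m F), IsUnit P ∧ IsUnit Q ∧ ∀ A, Ψ A = P * A.map σ * Q := by
  have hT := type_all hM hE i0 j0 h0 h
  have hS := supp_all hM hE hT
  let s : m → m → F → F := fun i j x => Ψ (single i j x) i j
  have hΨ : ∀ (A : Matrix m m F) i j, Ψ A i j = s i j (A i j) := by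
    intro A i j
    conv_lhs => rw [Matrix.matrix_eq_sum_single A]
    rw [map_sum, Matrix.sum_apply, Finset.sum_eq_single i]
    · rw [map_sum, Matrix.sum_apply, Finset.sum_eq_single j]
      · intro b _ hb
        exact hS i b _ i j (fun hh => hb hh.2.symm)
      · simp
    · intro a _ ha
      rw [map_sum, Matrix.sum_apply]
      exact Finset.sum_eq_zero fun b _ => hS a b _ i j (fun hh => ha hh.1.symm)
    · simp
  have hadd : ∀ i j x y, s i j (x + y) = s i j x + s i j y := by
    intro i j x y
    simp only [s, Matrix.single_add, map_add, Matrix.add_apply]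
  have hd1 : ∀ i, s i i 1 = 1 := by
    intro i; simp [s, hE]
  have hne : ∀ i j, s i j 1 ≠ 0 := by
    intro i j
    by_cases hij : i = j
    · subst hij; rw [hd1]; exact one_ne_zero
    · exact hT i j hij
  have hrel : ∀ i j k l, i ≠ j → k ≠ l → ∀ a b c d : F,
      s i k (a * c) * s j l (b * d) = s i l (a * d) * s j k (b * c) := by
    intro i j k l hij hkl a b c d
    have := hM (fun r => if r = i then a else b) (fun r => if r = k then c else d) i j k l
    simpa [hΨ, vecMulVec_apply, hij.symm, hkl.symm] using this
  have hc : ∀ i j k l, s i k 1 * s j l 1 = s i l 1 * s j k 1 := by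
    intro i j k l
    by_cases hij : i = j
    · subst hij; ring
    by_cases hkl : k = l
    · subst hkl; ring
    simpa using hrel i j k l hij hkl 1 1 1 1
  have hex : ∀ i : m, ∃ j, i ≠ j := by
    intro i
    by_cases hi : i = i0
    · exact ⟨j0, hi ▸ h0⟩
    · exact ⟨i0, hi⟩
  have hcol : ∀ i k l x, s i k x * s i l 1 = s i l x * s i k 1 := by
    intro i k l x
    by_cases hkl : k = l
    · subst hkl; ring
    obtain ⟨j, hij⟩ := hex i
    have h1 := hrel i j k l hij hkl x 1 1 1
    simp only [mul_one] at h1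
    have h2 := hc i j k l
    apply mul_right_cancel₀ (hne j k)
    linear_combination s i k 1 * h1 - s i k x * h2
  have hrow : ∀ i j k x, s i k x * s j k 1 = s j k x * s i k 1 := by
    intro i j k x
    by_cases hij : i = j
    · subst hij; ring
    obtain ⟨l, hkl⟩ := hex k
    have h1 := hrel i j k l hij hkl 1 1 x 1
    simp only [mul_one, one_mul] at h1
    have h2 := hc i j k l
    apply mul_right_cancel₀ (hne i l)
    linear_combination s i k 1 * h1 - s i k x * h2
  have hs : ∀ i j x, s i j x = s i i0 1 * s i0 i0 x * s i0 j 1 := by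
    intro i j x
    have h1 := hcol i j i0 x
    have h2 := hrow i i0 i0 x
    have h3 := hc i i0 j i0
    rw [hd1] at h2 h3
    apply mul_right_cancel₀ (hne i i0)
    linear_combination h1 + s i j 1 * h2 + s i0 i0 x * s i i0 1 * h3
  let σ : F →+* F := RingHom.mk' ⟨⟨fun x => s i0 i0 x, hd1 i0⟩, by
    intro x y
    have h1 := hrel i0 j0 i0 j0 h0 h0 x 1 y 1
    simp only [mul_one, one_mul] at h1
    rw [hd1, hs i0 j0 x, hs j0 i0 y, hd1] at h1
    have h2 := hc i0 j0 i0 j0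
    rw [hd1, hd1] at h2
    change s i0 i0 (x * y) = s i0 i0 x * s i0 i0 y
    linear_combination h1 - s i0 i0 x * s i0 i0 y * h2⟩ (fun x y => hadd i0 i0 x y)
  refine ⟨σ, diagonal fun i => s i i0 1, diagonal fun j => s i0 j 1, ?_, ?_, ?_⟩
  · rw [Matrix.isUnit_iff_isUnit_det, Matrix.det_diagonal, isUnit_iff_ne_zero,
      Finset.prod_ne_zero_iff]
    exact fun i _ => hne i i0
  · rw [Matrix.isUnit_iff_isUnit_det, Matrix.det_diagonal, isUnit_iff_ne_zero,
      Finset.prod_ne_zero_iff]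
    exact fun i _ => hne i0 i
  · intro A
    ext i j
    rw [hΨ, hs, Matrix.mul_diagonal, Matrix.diagonal_mul]
    rfl

theorem std_normalized [Nontrivial m] {Ψ : Matrix m m F →+ Matrix m m F} (hM : MinorPres Ψ)
    (hE : ∀ i, Ψ (single i i 1) = single i i 1) :
    ∃ (σ : F →+* F) (P Q : Matrix m m F), IsUnit P ∧ IsUnit Q ∧
      ((∀ A, Ψ A = P * A.map σ * Q) ∨ (∀ A, Ψ A = P * (Aᵀ).map σ * Q)) := by
  obtain ⟨i0, j0, h0⟩ := exists_pair_ne m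
  rcases type_or hM hE i0 j0 h0 with h | h
  · obtain ⟨σ, P, Q, hP, hQ, hA⟩ := std_of_type hM hE i0 j0 h0 h
    exact ⟨σ, P, Q, hP, hQ, Or.inl hA⟩
  · let Ψ' : Matrix m m F →+ Matrix m m F :=
      AddMonoidHom.mk' (fun A => (Ψ A)ᵀ) (by intro a b; simp)
    have hM' : MinorPres Ψ' := by
      intro v w i j k l
      change Ψ _ k i * Ψ _ l j = Ψ _ l i * Ψ _ k j
      rw [hM v w k l i j, mul_comm]
    have hE' : ∀ i, Ψ' (single i i 1) = single i i 1 := by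
      intro i
      change (Ψ _)ᵀ = _
      rw [hE, Matrix.transpose_single]
    obtain ⟨σ, P, Q, hP, hQ, hA⟩ := std_of_type hM' hE' i0 j0 h0 h
    refine ⟨σ, Qᵀ, Pᵀ, ?_, ?_, Or.inr fun A => ?_⟩
    · simpa [Matrix.isUnit_iff_isUnit_det] using hQ
    · simpa [Matrix.isUnit_iff_isUnit_det] using hP
    · have : (Ψ A)ᵀ = P * A.map σ * Q := hA A
      rw [← Matrix.transpose_transpose (Ψ A), this]
      simp [Matrix.transpose_mul, Matrix.mul_assoc, Matrix.transpose_map]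

theorem std_form [Nontrivial m] (Φ : Matrix m m F →+ Matrix m m F)
    (hR : ∀ v w, ∃ p q, Φ (vecMulVec v w) = vecMulVec p q) (A0 : Matrix m m F)
    (hA0 : IsUnit A0) (hB0 : IsUnit (Φ A0)) :
    ∃ (σ : F →+* F) (P Q : Matrix m m F), IsUnit P ∧ IsUnit Q ∧
      ((∀ A, Φ A = P * A.map σ * Q) ∨ (∀ A, Φ A = P * (Aᵀ).map σ * Q)) := by
  obtain ⟨A1, hA1⟩ := hA0.exists_left_inv
  have hA1' : A0 * A1 = 1 := mul_eq_one_comm.1 hA1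
  obtain ⟨B1, hB1⟩ := hB0.exists_left_inv
  have hB1' : Φ A0 * B1 = 1 := mul_eq_one_comm.1 hB1
  choose p q hpq using hR
  let v : m → m → F := fun b r => A0 r b
  have hA0s : A0 = ∑ b, vecMulVec (v b) (Pi.single b 1) := by
    ext r c
    simp [Matrix.sum_apply, vecMulVec_apply, v, Pi.single_apply]
  let P : Matrix m m F := Matrix.of fun r b => p (v b) (Pi.single b 1) r
  let Q' : Matrix m m F := Matrix.of fun b c => q (v b) (Pi.single b 1) c
  have hPQ' : P * Q' = Φ A0 := by
    conv_rhs => rw [hA0s, map_sum]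
    ext r c
    rw [Matrix.sum_apply, Matrix.mul_apply]
    refine Finset.sum_congr rfl fun b _ => ?_
    rw [hpq]; rfl
  have hPQ : P * (Q' * B1) = 1 := by rw [← Matrix.mul_assoc, hPQ', hB1']
  have hQP : (Q' * B1) * P = 1 := mul_eq_one_comm.1 hPQ
  have hUP : IsUnit P := IsUnit.of_mul_eq_one _ hPQ
  have hQ'u : Q' * (B1 * P) = 1 := by rw [← Matrix.mul_assoc, hQP]
  have hUQ : IsUnit Q' := IsUnit.of_mul_eq_one _ hQ'u
  let Ψ : Matrix m m F →+ Matrix m m F :=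
    AddMonoidHom.mk' (fun X => (Q' * B1) * Φ (A0 * X) * (B1 * P)) (by
      intro a b; simp [Matrix.mul_add, Matrix.add_mul])
  have hΨ : ∀ X, Ψ X = (Q' * B1) * Φ (A0 * X) * (B1 * P) := fun X => rfl
  have hM : MinorPres Ψ := by
    intro v w i j k l
    rw [hΨ, Matrix.mul_vecMulVec, hpq, Matrix.mul_vecMulVec, Matrix.vecMulVec_mul]
    simp only [vecMulVec_apply]
    ring
  have hE : ∀ i, Ψ (single i i 1) = single i i 1 := by
    intro i
    have e1 : single i i (1 : F) = vecMulVec (Pi.single i 1) (Pi.single i 1) := by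
      rw [vmv_single, one_mul]
    have e2 : A0 *ᵥ (Pi.single i 1) = v i := by
      ext r; simp [v]
    have e3 : p (v i) (Pi.single i 1) = P *ᵥ (Pi.single i 1) := by
      ext r; simp [P]
    have e4 : q (v i) (Pi.single i 1) = (Pi.single i 1) ᵥ* Q' := by
      ext r; simp [Q']
    rw [hΨ, e1, Matrix.mul_vecMulVec, e2, hpq, Matrix.mul_vecMulVec, Matrix.vecMulVec_mul, e3, e4,
      Matrix.mulVec_mulVec, Matrix.vecMul_vecMul, hQP, hQ'u, Matrix.one_mulVec, Matrix.vecMul_one]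
  have hinv : ∀ A, Φ A = P * Ψ (A1 * A) * Q' := by
    intro A
    rw [hΨ, ← Matrix.mul_assoc A0, hA1', Matrix.one_mul]
    have h2 : (B1 * P) * Q' = 1 := mul_eq_one_comm.1 hQ'u
    calc Φ A = (P * (Q' * B1)) * Φ A * ((B1 * P) * Q') := by
          rw [hPQ, h2, Matrix.one_mul, Matrix.mul_one]
      _ = _ := by simp only [Matrix.mul_assoc]
  obtain ⟨σ, P2, Q2, hP2, hQ2, hc⟩ := std_normalized hM hE
  have hA1u : IsUnit (A1.map σ) := (IsUnit.of_mul_eq_one _ hA1).map σ.mapMatrix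
  have hA1t : IsUnit ((A1ᵀ).map σ) := by
    rw [Matrix.transpose_map]
    simpa [Matrix.isUnit_iff_isUnit_det] using hA1u
  rcases hc with hc | hc
  · refine ⟨σ, P * P2 * A1.map σ, Q2 * Q', (hUP.mul hP2).mul hA1u, hQ2.mul hUQ, Or.inl fun A => ?_⟩
    rw [hinv, hc, Matrix.map_mul]
    simp only [Matrix.mul_assoc]
  · refine ⟨σ, P * P2, (A1ᵀ).map σ * (Q2 * Q'), hUP.mul hP2, hA1t.mul (hQ2.mul hUQ),
      Or.inr fun A => ?_⟩
    rw [hinv, hc, Matrix.transpose_mul, Matrix.map_mul]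
    simp only [Matrix.mul_assoc]

end standard

section assembly

variable {𝔽 : Type*} [Field 𝔽] [CharZero 𝔽] {k : ℕ} {n : Fin k → ℕ}

theorem blockEmbed_add (i : Fin k) (A B : Matrix (Fin (n i)) (Fin (n i)) 𝔽) :
    (blockEmbed i (A + B) : BlockAlg 𝔽 k n) = blockEmbed i A + blockEmbed i B := by
  funext l
  by_cases h : l = i
  · subst h; simp [blockEmbed_same]
  · simp [blockEmbed_ne h]

theorem blockEmbed_of_mem (i : Fin k) (a : BlockAlg 𝔽 k n) (ha : a ∈ blockSet i) :
    blockEmbed i (a i) = a := by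
  funext l
  by_cases h : l = i
  · subst h; simp [blockEmbed_same]
  · rw [blockEmbed_ne h, ha l h]

theorem matrix_sum_cols {m : Type*} [Fintype m] [DecidableEq m] (A : Matrix m m 𝔽) :
    A = ∑ b, vecMulVec (fun r => A r b) (Pi.single b 1) := by
  ext r c
  simp [Matrix.sum_apply, vecMulVec_apply, Pi.single_apply]

/-- The additive map of block `i` into the algebra. -/
def restr (Φ : BlockAlg 𝔽 k n →+ BlockAlg 𝔽 k n) (i : Fin k) :
    Matrix (Fin (n i)) (Fin (n i)) 𝔽 →+ BlockAlg 𝔽 k n :=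
  AddMonoidHom.mk' (fun A => Φ (blockEmbed i A)) (by
    intro a b; rw [blockEmbed_add, map_add])

theorem one_block (Φ : BlockAlg 𝔽 k n →+ BlockAlg 𝔽 k n) (hsurj : Function.Surjective Φ)
    (hsing : ∀ a, ¬ IsUnit a → ¬ IsUnit (Φ a)) (i : Fin k) :
    ∃ j, ∀ A l, l ≠ j → Φ (blockEmbed i A) l = 0 := by
  let G : (Fin (n i) → 𝔽) → (Fin (n i) → 𝔽) → BlockAlg 𝔽 k n :=
    fun v w => restr Φ i (vecMulVec v w)
  have hG : ∀ v w j l, j ≠ l → G v w j ≠ 0 → G v w l = 0 := by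
    intro v w j l hjl h
    exact ((key Φ hsurj hsing i v w).1 j l hjl).resolve_left h
  have addl : ∀ v v' w, G (v + v') w = G v w + G v' w := by
    intro v v' w; simp only [G, add_vecMulVec, map_add]
  have addr : ∀ v w w', G v (w + w') = G v w + G v w' := by
    intro v v' w; simp only [G, vecMulVec_add, map_add]
  have two : ∀ x y : BlockAlg 𝔽 k n, ∀ v w v' w' v'' w'', ∀ j l, j ≠ l → G v w j ≠ 0 →
      G v' w' l ≠ 0 → G v'' w'' ≠ G v w + G v' w' := by
    intro _ _ v w v' w' v'' w'' j l hjl h1 h2 h3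
    have e1 := hG v w j l hjl h1
    have e2 := hG v' w' l j hjl.symm h2
    have e3 : G v'' w'' j ≠ 0 := by rw [h3, Pi.add_apply, e2, add_zero]; exact h1
    have e4 := hG v'' w'' j l hjl e3
    rw [h3, Pi.add_apply, e1, zero_add] at e4
    exact h2 e4
  have all : ∀ v w v' w' j l, j ≠ l → G v w j ≠ 0 → G v' w' l = 0 := by
    intro v w v' w' j l hjl h1
    by_contra h2
    have z : ∀ v w v' w' j l, j ≠ l → G v w j ≠ 0 → G v' w' l ≠ 0 → G v w' = 0 := by
      intro v w v' w' j l hjl h1 h2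
      funext x
      by_contra hx
      by_cases hxj : x = j
      · subst hxj
        exact two 0 0 v w' v' w' (v + v') w' x l hjl hx h2 (addl _ _ _)
      · exact two 0 0 v w v w' v (w + w') j x (Ne.symm hxj) h1 hx (addr _ _ _)
    have z1 := z v w v' w' j l hjl h1 h2
    have z2 := z v' w' v w l j hjl.symm h2 h1
    refine two 0 0 v w v' w' (v + v') (w + w') j l hjl h1 h2 ?_
    rw [addl, addr, addr, z1, z2, add_zero, zero_add]
  have ex : ∃ j, ∀ v w l, l ≠ j → G v w l = 0 := by
    by_cases h : ∃ v w j, G v w j ≠ 0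
    · obtain ⟨v, w, j, h⟩ := h
      exact ⟨j, fun v' w' l hl => all v w v' w' j l hl.symm h⟩
    · push Not at h
      exact ⟨i, fun v w l _ => h v w l⟩
  obtain ⟨j, hj⟩ := ex
  refine ⟨j, fun A l hl => ?_⟩
  change restr Φ i A l = 0
  rw [matrix_sum_cols A, map_sum, Finset.sum_apply]
  exact Finset.sum_eq_zero fun b _ => hj _ _ l hl

theorem apply_perm (Φ : BlockAlg 𝔽 k n →+ BlockAlg 𝔽 k n) (π : Equiv.Perm (Fin k))
    (h : ∀ i A l, l ≠ π i → Φ (blockEmbed i A) l = 0) (B : BlockAlg 𝔽 k n) (i : Fin k) :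
    Φ B (π i) = Φ (blockEmbed i (B i)) (π i) := by
  conv_lhs => rw [← blockEmbed_sum B, map_sum, Finset.sum_apply]
  refine Finset.sum_eq_single i (fun l _ hl => h l _ _ ?_) (by simp)
  exact fun e => hl (π.injective e).symm

theorem forward (hn : ∀ i, 1 ≤ n i) (Φ : BlockAlg 𝔽 k n →+ BlockAlg 𝔽 k n)
    (hsurj : Function.Surjective Φ) (hsing : ∀ a, ¬ IsUnit a → ¬ IsUnit (Φ a)) :
      ∃ (π : Equiv.Perm (Fin k)) (hπ : ∀ i, n (π i) = n i),
        (∀ i, Φ '' blockSet i = blockSet (π i)) ∧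
        ∀ i, 2 ≤ n i →
          ∃ (σ : 𝔽 →+* 𝔽) (P Q : Matrix (Fin (n i)) (Fin (n i)) 𝔽),
            IsUnit P ∧ IsUnit Q ∧
            ((∀ A : Matrix (Fin (n i)) (Fin (n i)) 𝔽,
                Φ (blockEmbed i A) (π i) =
                  Matrix.reindex (finCongr (hπ i).symm) (finCongr (hπ i).symm)
                    (P * A.map σ * Q)) ∨
             (∀ A : Matrix (Fin (n i)) (Fin (n i)) 𝔽,
                Φ (blockEmbed i A) (π i) =
                  Matrix.reindex (finCongr (hπ i).symm) (finCongr (hπ i).symm)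
                    (P * (Aᵀ).map σ * Q))) := by
  choose π0 hπ0 using one_block Φ hsurj hsing
  obtain ⟨B, hB⟩ := hsurj 1
  have hs : Function.Surjective π0 := by
    intro j
    by_contra hc
    push Not at hc
    have h1 : Φ B j = 0 := by
      rw [← blockEmbed_sum B, map_sum, Finset.sum_apply]
      exact Finset.sum_eq_zero fun i _ => hπ0 i _ j (hc i).symm
    rw [hB] at h1
    have := congrFun (congrFun h1 ⟨0, hn j⟩) ⟨0, hn j⟩
    simp at this
  let π : Equiv.Perm (Fin k) := Equiv.ofBijective π0 (Finite.surjective_iff_bijective.1 hs)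
  have hπ1 : ∀ i A l, l ≠ π i → Φ (blockEmbed i A) l = 0 := hπ0
  have hBi : ∀ i, Φ (blockEmbed i (B i)) (π i) = 1 := by
    intro i
    rw [← apply_perm Φ π hπ1 B i, hB]; rfl
  have hBu : ∀ i, IsUnit (B i) := by
    have : IsUnit B := by
      by_contra h
      exact hsing B h (by rw [hB]; exact isUnit_one)
    exact fun i => Pi.isUnit_iff.1 this i
  have hle : ∀ i, n (π i) ≤ n i := by
    intro i
    choose p q hpq using fun v w => (key Φ hsurj hsing i v w).2 (π i)
    let P : Matrix (Fin (n (π i))) (Fin (n i)) 𝔽 :=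
      Matrix.of fun r b => p (fun r => B i r b) (Pi.single b 1) r
    let Q : Matrix (Fin (n i)) (Fin (n (π i))) 𝔽 :=
      Matrix.of fun b c => q (fun r => B i r b) (Pi.single b 1) c
    have hPQ : P * Q = 1 := by
      rw [← hBi i]
      change _ = restr Φ i (B i) (π i)
      conv_rhs => rw [matrix_sum_cols (B i), map_sum, Finset.sum_apply]
      ext r c
      rw [Matrix.sum_apply, Matrix.mul_apply]
      refine Finset.sum_congr rfl fun b _ => ?_
      change _ = Φ (blockEmbed i _) (π i) r c
      rw [hpq]; rfl
    have h1 := Matrix.rank_mul_le_left P Q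
    rw [hPQ, Matrix.rank_one, Fintype.card_fin] at h1
    exact h1.trans (Matrix.rank_le_width P)
  have hπ : ∀ i, n (π i) = n i := by
    have := (Finset.sum_eq_sum_iff_of_le (s := Finset.univ) (fun i _ => hle i)).1
      (Equiv.sum_comp π n)
    exact fun i => this i (Finset.mem_univ i)
  refine ⟨π, hπ, ?_, ?_⟩
  · intro i
    ext c
    constructor
    · rintro ⟨a, ha, rfl⟩ l hl
      rw [← blockEmbed_of_mem i a ha]
      exact hπ1 i _ l hl
    · intro hc
      obtain ⟨a, ha⟩ := hsurj c
      refine ⟨blockEmbed i (a i), fun l hl => blockEmbed_ne hl _, ?_⟩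
      funext l
      by_cases hl : l = π i
      · subst hl
        rw [← apply_perm Φ π hπ1 a i, ha]
      · rw [hπ1 i _ l hl, hc l hl]
  · intro i hi
    have : Nontrivial (Fin (n i)) := Fin.nontrivial_iff_two_le.2 hi
    let Φi : Matrix (Fin (n i)) (Fin (n i)) 𝔽 →+ Matrix (Fin (n i)) (Fin (n i)) 𝔽 :=
      AddMonoidHom.mk' (fun A => Matrix.reindex (finCongr (hπ i)) (finCongr (hπ i))
        (restr Φ i A (π i))) (by
          intro a b
          rw [map_add]
          rfl)
    have hR : ∀ v w, ∃ p q, Φi (vecMulVec v w) = vecMulVec p q := by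
      intro v w
      obtain ⟨p, q, hpq⟩ := (key Φ hsurj hsing i v w).2 (π i)
      refine ⟨p ∘ (finCongr (hπ i)).symm, q ∘ (finCongr (hπ i)).symm, ?_⟩
      change Matrix.reindex _ _ (Φ (blockEmbed i _) (π i)) = _
      rw [hpq]
      rfl
    have hone : Φi (B i) = 1 := by
      change Matrix.reindex _ _ (Φ (blockEmbed i _) (π i)) = _
      rw [hBi]
      simp
    obtain ⟨σ, P, Q, hP, hQ, hc⟩ := std_form Φi hR (B i) (hBu i) (by rw [hone]; exact isUnit_one)
    have hback : ∀ A M, Φi A = M → Φ (blockEmbed i A) (π i) =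
        Matrix.reindex (finCongr (hπ i).symm) (finCongr (hπ i).symm) M := by
      rintro A M rfl
      rfl
    refine ⟨σ, P, Q, hP, hQ, ?_⟩
    rcases hc with hc | hc
    · exact Or.inl fun A => hback A _ (hc A)
    · exact Or.inr fun A => hback A _ (hc A)

theorem backward (hn : ∀ i, 1 ≤ n i) (Φ : BlockAlg 𝔽 k n →+ BlockAlg 𝔽 k n)
    (h : ∃ (π : Equiv.Perm (Fin k)) (hπ : ∀ i, n (π i) = n i),
        (∀ i, Φ '' blockSet i = blockSet (π i)) ∧
        ∀ i, 2 ≤ n i →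
          ∃ (σ : 𝔽 →+* 𝔽) (P Q : Matrix (Fin (n i)) (Fin (n i)) 𝔽),
            IsUnit P ∧ IsUnit Q ∧
            ((∀ A : Matrix (Fin (n i)) (Fin (n i)) 𝔽,
                Φ (blockEmbed i A) (π i) =
                  Matrix.reindex (finCongr (hπ i).symm) (finCongr (hπ i).symm)
                    (P * A.map σ * Q)) ∨
             (∀ A : Matrix (Fin (n i)) (Fin (n i)) 𝔽,
                Φ (blockEmbed i A) (π i) =
                  Matrix.reindex (finCongr (hπ i).symm) (finCongr (hπ i).symm)
                    (P * (Aᵀ).map σ * Q)))) (a : BlockAlg 𝔽 k n) (ha : ¬ IsUnit a) :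
    ¬ IsUnit (Φ a) := by
  obtain ⟨π, hπ, himg, hstd⟩ := h
  have hπ1 : ∀ i A l, l ≠ π i → Φ (blockEmbed i A) l = 0 := by
    intro i A l hl
    have : Φ (blockEmbed i A) ∈ (blockSet (π i) : Set (BlockAlg 𝔽 k n)) := by
      rw [← himg i]
      exact ⟨_, fun l hl => blockEmbed_ne hl _, rfl⟩
    exact this l hl
  rw [isUnit_iff_det] at ha ⊢
  push Not at ha ⊢
  obtain ⟨i, hi⟩ := ha
  refine ⟨π i, ?_⟩
  rw [apply_perm Φ π hπ1 a i]
  by_cases h2 : 2 ≤ n i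
  · obtain ⟨σ, P, Q, -, -, hc⟩ := hstd i h2
    have hσ : ∀ M : Matrix (Fin (n i)) (Fin (n i)) 𝔽, M.det = 0 → (M.map σ).det = 0 := by
      intro M hM
      have := RingHom.map_det σ M
      rw [hM, map_zero] at this
      exact this.symm
    rcases hc with hc | hc
    · rw [hc, Matrix.det_reindex, Matrix.det_mul, Matrix.det_mul, hσ _ hi]
      simp
    · rw [hc, Matrix.det_reindex, Matrix.det_mul, Matrix.det_mul,
        hσ _ (by rw [Matrix.det_transpose, hi])]
      simp
  · have h1 : n i = 1 := by have := hn i; omega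
    have h0 : a i = 0 := by
      have : Unique (Fin (n i)) := by rw [h1]; infer_instance
      rw [Matrix.det_unique] at hi
      ext r c
      rw [Unique.eq_default r, Unique.eq_default c, hi]; rfl
    have hz : (blockEmbed i (0 : Matrix (Fin (n i)) (Fin (n i)) 𝔽) : BlockAlg 𝔽 k n) = 0 := by
      funext l
      by_cases h : l = i
      · subst h; rw [blockEmbed_same]; rfl
      · rw [blockEmbed_ne h]; rfl
    rw [h0, hz, map_zero]
    have : Nonempty (Fin (n (π i))) := ⟨⟨0, hn _⟩⟩
    exact Matrix.det_zero

end assembly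

theorem stmt3 {𝔽 : Type*} [Field 𝔽] [CharZero 𝔽] {k : ℕ} (n : Fin k → ℕ) (hk : 1 ≤ k)
    (hn : ∀ i, 1 ≤ n i)
    (Φ : BlockAlg 𝔽 k n → BlockAlg 𝔽 k n)
    (hadd : ∀ x y, Φ (x + y) = Φ x + Φ y)
    (hsurj : Function.Surjective Φ) :
    (∀ a, ¬ IsUnit a → ¬ IsUnit (Φ a)) ↔
      ∃ (π : Equiv.Perm (Fin k)) (hπ : ∀ i, n (π i) = n i),
        (∀ i, Φ '' blockSet i = blockSet (π i)) ∧
        ∀ i, 2 ≤ n i →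
          ∃ (σ : 𝔽 →+* 𝔽) (P Q : Matrix (Fin (n i)) (Fin (n i)) 𝔽),
            IsUnit P ∧ IsUnit Q ∧
            ((∀ A : Matrix (Fin (n i)) (Fin (n i)) 𝔽,
                Φ (blockEmbed i A) (π i) =
                  Matrix.reindex (finCongr (hπ i).symm) (finCongr (hπ i).symm)
                    (P * A.map σ * Q)) ∨
             (∀ A : Matrix (Fin (n i)) (Fin (n i)) 𝔽,
                Φ (blockEmbed i A) (π i) =
                  Matrix.reindex (finCongr (hπ i).symm) (finCongr (hπ i).symm)
                    (P * (Aᵀ).map σ * Q))) := by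
  exact ⟨fun h => forward hn (AddMonoidHom.mk' Φ hadd) hsurj h,
    fun h => backward hn (AddMonoidHom.mk' Φ hadd) h⟩
end

section
/- Let 𝔽 be a field of characteristic zero and let 𝒜 = M_{n_1}(𝔽) ⊕ ⋯ ⊕ M_{n_k}(𝔽). If Φ : 𝒜 → 𝒜 is an additive surjection that maps singular elements to singular elements, then Φ maps every element of rank one to an element of rank one or to zero. -/
/-- The rank of a block-diagonal element, i.e. the sum of the ranks of its blocks. -/
noncomputable def blockRank {𝔽 : Type*} [Field 𝔽] {k : ℕ} {n : Fin k → ℕ}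
    (a : BlockAlg 𝔽 k n) : ℕ :=
  ∑ i : Fin k, (a i).rank

namespace BlockProof

/-- total determinant -/
noncomputable def bdet {𝔽 : Type*} [Field 𝔽] {k : ℕ} {n : Fin k → ℕ} (a : BlockAlg 𝔽 k n) : 𝔽 :=
  ∏ i, (a i).det

variable {𝔽 : Type*} [Field 𝔽] {k : ℕ} {n : Fin k → ℕ}

theorem bdet_mul (a b : BlockAlg 𝔽 k n) : bdet (a * b) = bdet a * bdet b := by
  simp [bdet, Finset.prod_mul_distrib]

theorem bdet_one : bdet (1 : BlockAlg 𝔽 k n) = 1 := by simp [bdet]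

theorem isUnit_iff_bdet (a : BlockAlg 𝔽 k n) : IsUnit a ↔ bdet a ≠ 0 := by
  rw [Pi.isUnit_iff, bdet, Finset.prod_ne_zero_iff]
  simp [Matrix.isUnit_iff_isUnit_det]

theorem bdet_smul (c : 𝔽) (a : BlockAlg 𝔽 k n) : bdet (c • a) = c ^ (∑ i, n i) * bdet a := by
  simp [bdet, Finset.prod_mul_distrib, Finset.prod_pow_eq_pow_sum]

open Polynomial in
/-- polynomial `det (X A + B)` -/
noncomputable def bpoly (a b : BlockAlg 𝔽 k n) : 𝔽[X] :=
  ∏ i, Matrix.det ((X : 𝔽[X]) • (a i).map C + (b i).map C)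

open Polynomial in
theorem bpoly_eval (a b : BlockAlg 𝔽 k n) (s : 𝔽) : (bpoly a b).eval s = bdet (s • a + b) := by
  simp only [bpoly, bdet, eval_prod]
  refine Finset.prod_congr rfl fun i _ => ?_
  rw [← coe_evalRingHom, RingHom.map_det]
  congr 1
  ext p q
  simp
  ring

open Polynomial in
theorem bpoly_deg (a b : BlockAlg 𝔽 k n) :
    (bpoly a b).natDegree ≤ ∑ i, n i ∧ (bpoly a b).coeff (∑ i, n i) = bdet a := by
  unfold bpoly bdet
  induction (Finset.univ : Finset (Fin k)) using Finset.induction_on with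
  | empty => simp
  | insert i s hi ih =>
    rw [Finset.prod_insert hi, Finset.sum_insert hi, Finset.prod_insert hi]
    have h1 := natDegree_det_X_add_C_le (a i) (b i)
    have h2 := coeff_det_X_add_C_card (a i) (b i)
    rw [Fintype.card_fin] at h1 h2
    exact ⟨natDegree_mul_le.trans (add_le_add h1 ih.1), by
      rw [coeff_mul_add_eq_of_natDegree_le h1 ih.1, h2, ih.2]⟩

/-- block diagonal element with diagonal entries -/
def bdiag (d : (Σ i : Fin k, Fin (n i)) → 𝔽) : BlockAlg 𝔽 k n :=
  fun i => Matrix.diagonal fun p => d ⟨i, p⟩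

theorem bdet_bdiag (d : (Σ i : Fin k, Fin (n i)) → 𝔽) : bdet (bdiag d) = ∏ x, d x := by
  simp [bdet, bdiag, Fintype.prod_sigma]

theorem bdiag_mul (d e : (Σ i : Fin k, Fin (n i)) → 𝔽) : bdiag d * bdiag e = bdiag (d * e) := by
  ext1 i; simp [bdiag]

theorem bdiag_one : bdiag (1 : (Σ i : Fin k, Fin (n i)) → 𝔽) = 1 := by
  ext1 i; simp [bdiag]

section mult
variable [CharZero 𝔽] (Φ : BlockAlg ℚ k n →+ BlockAlg 𝔽 k n)
  (hs : ∀ x, bdet x = 0 → bdet (Φ x) = 0)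

include hs

open Polynomial in
theorem F_distinct (d : (Σ i : Fin k, Fin (n i)) → ℚ) (hd : Function.Injective d)
    (y z : BlockAlg ℚ k n) :
    bdet (Φ (y * bdiag d * z)) = bdet (Φ (y * z)) * ((∏ x, d x : ℚ) : 𝔽) := by
  classical
  set A := Φ (y * z)
  set B := Φ (y * bdiag d * z)
  have hN : Fintype.card (Σ i : Fin k, Fin (n i)) = ∑ i, n i := by simp
  set g : 𝔽[X] := ∏ x, (X + C ((d x : ℚ) : 𝔽)) with hg
  have hgm : g.Monic := monic_prod_of_monic _ _ fun x _ => monic_X_add_C _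
  have hgd : g.natDegree = ∑ i, n i := by
    rw [hg, natDegree_prod_of_monic _ _ fun x _ => monic_X_add_C _]
    simp
  have inj : Function.Injective fun x => -((d x : ℚ) : 𝔽) := by
    intro x y h
    apply hd
    simpa using h
  have key : bpoly A B = C (bdet A) * g := by
    apply eq_of_degree_sub_lt_of_eval_finset_eq (Finset.univ.image fun x => -((d x : ℚ) : 𝔽))
    · rw [Finset.card_image_of_injective _ inj, Finset.card_univ, hN]
      rw [degree_lt_iff_coeff_zero]
      intro m hm
      rcases hm.eq_or_lt with h | h
      · subst h
        rw [coeff_sub, (bpoly_deg A B).2, coeff_C_mul, ← hgd, hgm.coeff_natDegree]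
        simp
      · rw [coeff_sub, coeff_C_mul, coeff_eq_zero_of_natDegree_lt ((bpoly_deg A B).1.trans_lt h),
          coeff_eq_zero_of_natDegree_lt (hgd.trans_lt h)]
        simp
    · intro s hsx
      obtain ⟨x, -, rfl⟩ := Finset.mem_image.1 hsx
      have : g.eval (-((d x : ℚ) : 𝔽)) = 0 := by
        rw [hg, eval_prod]
        exact Finset.prod_eq_zero (Finset.mem_univ x) (by simp)
      rw [eval_mul, this, mul_zero, bpoly_eval]
      have h2 : (-((d x : ℚ) : 𝔽)) • A + B = Φ (y * bdiag (fun w => d w - d x) * z) := by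
        have : bdiag (fun w => d w - d x) = (-(d x)) • (1 : BlockAlg ℚ k n) + bdiag d := by
          ext i p q
          by_cases h : p = q
          · subst h; simp [bdiag]; ring
          · simp [bdiag, h]
        rw [this, mul_add, add_mul, map_add]
        congr 1
        rw [mul_smul_comm, mul_one, smul_mul_assoc]
        have := map_ratCast_smul Φ ℚ 𝔽 (-(d x)) (y * z)
        simp only [Rat.cast_id] at this
        rw [this]
        push_cast
        rfl
      rw [h2]
      apply hs
      rw [bdet_mul, bdet_mul, bdet_bdiag, Finset.prod_eq_zero (Finset.mem_univ x) (by simp)]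
      simp
  have := congrArg (eval 0) key
  rw [bpoly_eval, eval_mul, hg, eval_prod] at this
  simpa using this

omit hs in
theorem exists_split {σ : Type*} [Fintype σ] (d : σ → ℚ) (hd : ∀ x, d x ≠ 0) :
    ∃ e f : σ → ℚ, Function.Injective e ∧ Function.Injective f ∧ d = e * f := by
  classical
  let j := Fintype.equivFin σ
  have hfin : (⋃ x, ⋃ y, {M : ℕ | x ≠ y ∧ d x * (M + 1 + (j y : ℕ)) = d y * (M + 1 + (j x : ℕ))}).Finite := by
    refine Set.finite_iUnion fun x => Set.finite_iUnion fun y => ?_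
    apply Set.Subsingleton.finite
    rintro M ⟨hxy, hM⟩ M' ⟨-, hM'⟩
    by_cases h : d x = d y
    · exfalso
      rw [h] at hM
      have := mul_left_cancel₀ (hd y) hM
      apply hxy
      apply j.injective
      apply Fin.ext
      have h3 : ((j y : ℕ) : ℚ) = (j x : ℕ) := by linarith
      exact_mod_cast h3.symm
    · have h4 : (d x - d y) * ((M : ℚ) - M') = 0 := by linear_combination hM - hM'
      rcases mul_eq_zero.1 h4 with h5 | h5
      · exact absurd (sub_eq_zero.1 h5) h
      · exact_mod_cast sub_eq_zero.1 h5
  obtain ⟨M, hM⟩ := hfin.infinite_compl.nonempty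
  have pos : ∀ x, ((M : ℚ) + 1 + (j x : ℕ)) ≠ 0 := fun x => by positivity
  refine ⟨fun x => M + 1 + (j x : ℕ), fun x => d x / (M + 1 + (j x : ℕ)), ?_, ?_, ?_⟩
  · intro x y h
    apply j.injective
    apply Fin.ext
    have h : (M : ℚ) + 1 + (j x : ℕ) = M + 1 + (j y : ℕ) := h
    have h3 : ((j x : ℕ) : ℚ) = (j y : ℕ) := by linarith
    exact_mod_cast h3
  · intro x y h
    by_contra hxy
    apply hM
    simp only [Set.mem_iUnion]
    refine ⟨x, y, hxy, ?_⟩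
    exact (div_eq_div_iff (pos x) (pos y)).1 h
  · ext x
    simp only [Pi.mul_apply]
    field_simp [pos x]

theorem F_diag (d : (Σ i : Fin k, Fin (n i)) → ℚ) (hd : ∀ x, d x ≠ 0)
    (y z : BlockAlg ℚ k n) :
    bdet (Φ (y * bdiag d * z)) = bdet (Φ (y * z)) * ((∏ x, d x : ℚ) : 𝔽) := by
  obtain ⟨e, f, he, hf, rfl⟩ := exists_split d hd
  rw [← bdiag_mul, ← mul_assoc, F_distinct Φ hs f hf, F_distinct Φ hs e he]
  simp [Finset.prod_mul_distrib, mul_assoc]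

/-- multiplicative elements -/
def Good (Φ : BlockAlg ℚ k n →+ BlockAlg 𝔽 k n) (g : BlockAlg ℚ k n) : Prop :=
  ∀ x, bdet (Φ (x * g)) = bdet (Φ x) * ((bdet g : ℚ) : 𝔽)

omit hs in
theorem Good.mul {Φ : BlockAlg ℚ k n →+ BlockAlg 𝔽 k n} {g h} (hg : Good Φ g) (hh : Good Φ h) :
    Good Φ (g * h) := by
  intro x
  rw [← mul_assoc, hh, hg, bdet_mul]
  push_cast
  ring

omit hs [CharZero 𝔽] in
theorem mulSingle_diag (i : Fin k) (D : Fin (n i) → ℚ) :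
    (Pi.mulSingle i (Matrix.diagonal D) : BlockAlg ℚ k n)
      = bdiag fun x => if h : x.1 = i then D (h ▸ x.2) else 1 := by
  ext1 j
  by_cases h : j = i
  · subst h; simp [bdiag]
  · simp [bdiag, h]

theorem single_diag (i : Fin k) (D : Fin (n i) → ℚ) (hD : ∀ r, D r ≠ 0) (y z : BlockAlg ℚ k n) :
    bdet (Φ (y * Pi.mulSingle i (Matrix.diagonal D) * z))
      = bdet (Φ (y * z)) * ((∏ r, D r : ℚ) : 𝔽) := by
  have h1 : bdet (Pi.mulSingle i (Matrix.diagonal D) : BlockAlg ℚ k n) = ∏ r, D r := by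
    rw [bdet, Finset.prod_eq_single i]
    · simp
    · intro j _ h
      simp [h]
    · simp
  rw [← h1, mulSingle_diag, bdet_bdiag, F_diag Φ hs]
  rintro ⟨j, p⟩
  dsimp only
  split_ifs with h
  · exact hD _
  · exact one_ne_zero

omit hs [CharZero 𝔽] in
theorem bdet_single (i : Fin k) (M : Matrix (Fin (n i)) (Fin (n i)) ℚ) :
    bdet (Pi.mulSingle i M : BlockAlg ℚ k n) = M.det := by
  rw [bdet, Finset.prod_eq_single i]
  · simp
  · intro j _ h
    simp [h]
  · simp

theorem good_single (i : Fin k) (M : Matrix (Fin (n i)) (Fin (n i)) ℚ) (hM : M.det ≠ 0) :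
    Good Φ (Pi.mulSingle i M) := by
  refine Matrix.diagonal_transvection_induction_of_det_ne_zero (fun M => Good Φ (Pi.mulSingle i M))
    M hM ?_ ?_ ?_
  · intro D hD x
    rw [Matrix.det_diagonal, Finset.prod_ne_zero_iff] at hD
    rw [bdet_single, ← mul_one (x * _), single_diag Φ hs i D (fun r => hD r (Finset.mem_univ r)),
      mul_one, Matrix.det_diagonal]
  · rintro ⟨p, q, hpq, c⟩ x
    rw [Matrix.TransvectionStruct.toMatrix_mk, bdet_single, Matrix.det_transvection_of_ne _ _ hpq]
    -- commutator
    let D : Fin (n i) → ℚ := fun r => if r = p then 2 else 1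
    let D' : Fin (n i) → ℚ := fun r => if r = p then 2⁻¹ else 1
    have hD : ∏ r, D r = 2 := by simp [D]
    have hD' : ∏ r, D' r = 2⁻¹ := by simp [D']
    have e1 : (Matrix.transvection p q c : Matrix (Fin (n i)) (Fin (n i)) ℚ)
        = Matrix.transvection p q (-c) * Matrix.diagonal D * Matrix.transvection p q c
          * Matrix.diagonal D' := by
      have hqp : q ≠ p := fun h => hpq h.symm
      have h1 : ∀ b : ℚ, Matrix.single p q b * Matrix.diagonal D = Matrix.single p q b := by
        intro b; ext r s
        rw [Matrix.mul_diagonal, Matrix.single_apply]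
        split_ifs with h
        · simp [D, ← h.2, hqp]
        · simp
      have h2 : ∀ b : ℚ, Matrix.single p q b * Matrix.diagonal D' = Matrix.single p q b := by
        intro b; ext r s
        rw [Matrix.mul_diagonal, Matrix.single_apply]
        split_ifs with h
        · simp [D', ← h.2, hqp]
        · simp
      have h3 : ∀ b : ℚ, Matrix.diagonal D * Matrix.single p q b = Matrix.single p q (2 * b) := by
        intro b; ext r s
        rw [Matrix.diagonal_mul, Matrix.single_apply, Matrix.single_apply]
        split_ifs with h
        · simp [D, ← h.1]
        · simp
      have h4 : Matrix.diagonal D * Matrix.diagonal D' = 1 := by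
        rw [Matrix.diagonal_mul_diagonal, ← Matrix.diagonal_one]
        congr 1
        ext r
        by_cases h : r = p <;> simp [D, D', h]
      simp only [Matrix.transvection, add_mul, mul_add, one_mul, mul_one, h1, h2, h3, h4,
        Matrix.single_mul_single_of_ne _ _ _ _ hqp, zero_mul]
      rw [add_zero, add_assoc, ← Matrix.single_add]
      congr 2
      ring
    have e2 : x * Pi.mulSingle i (Matrix.transvection p q c)
        = x * Pi.mulSingle i (Matrix.transvection p q (-c)) * Pi.mulSingle i (Matrix.diagonal D)
          * (Pi.mulSingle i (Matrix.transvection p q c) * Pi.mulSingle i (Matrix.diagonal D')) := by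
      conv_lhs => rw [e1]
      simp only [Pi.mulSingle_mul, mul_assoc]
    have e3 : x * Pi.mulSingle i (Matrix.transvection p q (-c))
          * (Pi.mulSingle i (Matrix.transvection p q c) * Pi.mulSingle i (Matrix.diagonal D'))
        = x * Pi.mulSingle i (Matrix.diagonal D') * 1 := by
      have e4 : (Pi.mulSingle i (Matrix.transvection p q (-c)) : BlockAlg ℚ k n)
          * Pi.mulSingle i (Matrix.transvection p q c) = 1 := by
        rw [← Pi.mulSingle_mul, Matrix.transvection_mul_transvection_same _ _ hpq]
        simp
      rw [mul_one, ← mul_assoc, mul_assoc x, e4, mul_one]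
    rw [e2, single_diag Φ hs i D (fun r => by simp only [D]; split_ifs <;> norm_num), e3,
      single_diag Φ hs i D' (fun r => by simp only [D']; split_ifs <;> norm_num), hD, hD']
    simp
  · intro A B hA hB h1 h2
    rw [Pi.mulSingle_mul]
    exact h1.mul h2

theorem good_all (g : BlockAlg ℚ k n) (hg : bdet g ≠ 0) : Good Φ g := by
  classical
  rw [bdet, Finset.prod_ne_zero_iff] at hg
  have : ∀ s : Finset (Fin k), Good Φ (fun i => if i ∈ s then g i else 1) := by
    intro s
    induction s using Finset.induction_on with
    | empty =>
      intro x
      have : (fun i => if i ∈ (∅ : Finset (Fin k)) then g i else 1 : BlockAlg ℚ k n) = 1 := by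
        ext1 i; simp
      rw [this, bdet_one]
      simp
    | insert i s hi ih =>
      have : (fun j => if j ∈ insert i s then g j else 1 : BlockAlg ℚ k n)
          = Pi.mulSingle i (g i) * (fun i => if i ∈ s then g i else 1) := by
        ext1 j
        by_cases h : j = i
        · subst h; simp [hi]
        · simp [h]
      rw [this]
      exact (good_single Φ hs i (g i) (hg i (Finset.mem_univ i))).mul ih
  simpa using this Finset.univ

theorem F_eq (g : BlockAlg ℚ k n) : bdet (Φ g) = bdet (Φ 1) * ((bdet g : ℚ) : 𝔽) := by
  by_cases hg : bdet g = 0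
  · rw [hg, hs g hg]; simp
  · have := good_all Φ hs g hg 1
    rwa [one_mul] at this

end mult
end BlockProof

namespace BlockProof
variable {𝔽 : Type*} [Field 𝔽] {k : ℕ} {n : Fin k → ℕ}

theorem pivot {m : Type*} [Fintype m] [DecidableEq m] (B : Matrix m m 𝔽) :
    ∃ (P Q : Matrix m m 𝔽) (D : m → 𝔽), P.det = 1 ∧ Q.det = 1 ∧ B = P * Matrix.diagonal D * Q := by
  obtain ⟨L, L', D, h⟩ := Matrix.Pivot.exists_list_transvec_mul_diagonal_mul_list_transvec B
  exact ⟨_, _, D, by simp, by simp, h⟩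

theorem compl_matrix {m : Type*} [Fintype m] [DecidableEq m] (B : Matrix m m 𝔽) :
    ∃ (x : Matrix m m 𝔽) (c : 𝔽), c ≠ 0 ∧ ∀ l : 𝔽, (x + l • B).det = c * l ^ B.rank := by
  classical
  obtain ⟨P, Q, D, hP, hQ, rfl⟩ := pivot B
  have hr : (P * Matrix.diagonal D * Q).rank = Fintype.card {i // D i ≠ 0} := by
    rw [Matrix.rank_mul_eq_left_of_isUnit_det _ _ (by simp [hQ]),
      Matrix.rank_mul_eq_right_of_isUnit_det _ _ (by simp [hP]), Matrix.rank_diagonal]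
  refine ⟨P * Matrix.diagonal (fun i => if D i = 0 then 1 else 0) * Q,
    ∏ i, (if D i = 0 then 1 else D i), ?_, ?_⟩
  · rw [Finset.prod_ne_zero_iff]
    intro i _
    split_ifs with h
    · exact one_ne_zero
    · exact h
  · intro l
    have : P * Matrix.diagonal (fun i => if D i = 0 then (1 : 𝔽) else 0) * Q
        + l • (P * Matrix.diagonal D * Q)
        = P * Matrix.diagonal (fun i => (if D i = 0 then 1 else D i) * (if D i ≠ 0 then l else 1)) * Q := by
      rw [← smul_mul_assoc, ← mul_smul_comm, ← add_mul, ← mul_add]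
      congr 2
      rw [← Matrix.diagonal_smul, Matrix.diagonal_add]
      congr 1
      ext i
      by_cases h : D i = 0 <;> simp [h, mul_comm]
    rw [this, Matrix.det_mul, Matrix.det_mul, hP, hQ, Matrix.det_diagonal,
      Finset.prod_mul_distrib, hr, Fintype.card_subtype]
    have : (∏ i, if D i ≠ 0 then l else 1) = l ^ (Finset.univ.filter fun i => D i ≠ 0).card := by
      rw [Finset.prod_ite]
      simp
    rw [this]
    simp

theorem compl_block (b : BlockAlg 𝔽 k n) :
    ∃ (x : BlockAlg 𝔽 k n) (c : 𝔽), c ≠ 0 ∧ ∀ l : 𝔽, bdet (x + l • b) = c * l ^ blockRank b := by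
  choose x c hc h using fun i => compl_matrix (b i)
  refine ⟨x, ∏ i, c i, Finset.prod_ne_zero_iff.2 fun i _ => hc i, fun l => ?_⟩
  rw [blockRank, ← Finset.prod_pow_eq_pow_sum, ← Finset.prod_mul_distrib]
  exact Finset.prod_congr rfl fun i _ => h i l

theorem rank_zero_matrix {m : Type*} [Fintype m] [DecidableEq m] {B : Matrix m m 𝔽}
    (hi : B.rank = 0) : B = 0 := by
  classical
  obtain ⟨P, Q, D, hP, hQ, hb⟩ := pivot B
  rw [hb, Matrix.rank_mul_eq_left_of_isUnit_det _ _ (by simp [hQ]),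
      Matrix.rank_mul_eq_right_of_isUnit_det _ _ (by simp [hP]), Matrix.rank_diagonal,
      Fintype.card_eq_zero_iff] at hi
  have : D = 0 := by
    ext r
    by_contra hr
    exact hi.false ⟨r, hr⟩
  rw [hb, this]
  simp

theorem blockRank_eq_zero {b : BlockAlg 𝔽 k n} (h : blockRank b = 0) : b = 0 := by
  rw [blockRank, Finset.sum_eq_zero_iff] at h
  ext1 i
  exact rank_zero_matrix (h i (Finset.mem_univ i))

/-- determinantal characterization of rank at most one -/
def R1 (z : BlockAlg 𝔽 k n) : Prop :=
  ∀ x, bdet x = 0 → bdet (x + (2 : 𝔽) • z) = 2 * bdet (x + z)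

theorem R1.rank [CharZero 𝔽] {b : BlockAlg 𝔽 k n} (h : R1 b) : blockRank b = 1 ∨ b = 0 := by
  by_cases h0 : blockRank b = 0
  · exact Or.inr (blockRank_eq_zero h0)
  left
  obtain ⟨x, c, hc, hx⟩ := compl_block b
  have h1 := hx 0
  rw [zero_smul, add_zero, zero_pow h0, mul_zero] at h1
  have h2 := h x h1
  have h3 := hx 1
  rw [one_smul, one_pow, mul_one] at h3
  rw [hx 2, h3, mul_comm 2 c] at h2
  have h4 := mul_left_cancel₀ hc h2
  have h5 : (2 : ℕ) ^ blockRank b = 2 ^ 1 := by exact_mod_cast h4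
  exact Nat.pow_right_injective le_rfl h5

theorem R1.smul {z : BlockAlg 𝔽 k n} (h : R1 z) {c : 𝔽} (hc : c ≠ 0) : R1 (c • z) := by
  intro x hx
  have e1 : x + (2 : 𝔽) • c • z = c • (c⁻¹ • x + (2 : 𝔽) • z) := by
    rw [smul_add, smul_smul c, mul_inv_cancel₀ hc, one_smul, smul_comm]
  have e2 : x + c • z = c • (c⁻¹ • x + z) := by
    rw [smul_add, smul_smul, mul_inv_cancel₀ hc, one_smul]
  rw [e1, e2, bdet_smul, bdet_smul, h _ (by rw [bdet_smul, hx, mul_zero])]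
  ring

theorem R1.limit [CharZero 𝔽] {y b : BlockAlg 𝔽 k n} {S : Set ℕ} (hS : S.Infinite)
    (h : ∀ s ∈ S, R1 (y + (s : 𝔽) • b)) : R1 b := by
  intro x hx
  have key : bpoly ((2 : 𝔽) • y) (x + (2 : 𝔽) • b) = Polynomial.C 2 * bpoly y (x + b) := by
    apply Polynomial.eq_of_infinite_eval_eq
    have hS' : (S \ {0}).Infinite := hS.sdiff (Set.finite_singleton 0)
    refine (hS'.image (f := fun s : ℕ => ((s : 𝔽))⁻¹) ?_).mono ?_
    · intro s _ t _ hst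
      exact_mod_cast inv_injective hst
    · rintro _ ⟨s, ⟨hs, hs0⟩, rfl⟩
      have hs0 : (s : 𝔽) ≠ 0 := by exact_mod_cast hs0
      have := (h s hs).smul (inv_ne_zero hs0) x hx
      rw [smul_add, smul_smul, inv_mul_cancel₀ hs0, one_smul] at this
      simp only [Set.mem_ofPred_eq, Polynomial.eval_mul, bpoly_eval, Polynomial.eval_C]
      rw [smul_comm, show (2 : 𝔽) • (s : 𝔽)⁻¹ • y + (x + (2 : 𝔽) • b)
        = x + (2 : 𝔽) • ((s : 𝔽)⁻¹ • y + b) by rw [smul_add]; abel, this]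
      congr 2
      abel
  have := congrArg (Polynomial.eval 0) key
  simpa [bpoly_eval] using this

/-- matrix units -/
def E (a : Σ i : Fin k, Fin (n i) × Fin (n i)) : BlockAlg 𝔽 k n :=
  Pi.single a.1 (Matrix.single a.2.1 a.2.2 1)

theorem sum_E (x : BlockAlg 𝔽 k n) :
    x = ∑ a : Σ i : Fin k, Fin (n i) × Fin (n i), x a.1 a.2.1 a.2.2 • (E a : BlockAlg 𝔽 k n) := by
  rw [Fintype.sum_sigma]
  ext1 j
  rw [Finset.sum_apply, Finset.sum_eq_single j]
  · ext r s
    simp [E, Fintype.sum_prod_type, Matrix.sum_apply, Matrix.single_apply, ite_and]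
  · intro i _ hi
    simp [E, Finset.sum_apply, Pi.single_eq_of_ne hi.symm]
  · simp

theorem R1_E (i : Fin k) (p : Fin (n i)) : R1 (E ⟨i, p, p⟩ : BlockAlg 𝔽 k n) := by
  intro x hx
  have : ∀ l : 𝔽, bdet (x + l • (E ⟨i, p, p⟩ : BlockAlg 𝔽 k n)) = l *
      (((x i).updateRow p (Pi.single p 1)).det * ∏ j ∈ Finset.univ.erase i, (x j).det) := by
    intro l
    have hx' : (x i).det * ∏ j ∈ Finset.univ.erase i, (x j).det = 0 := by
      rw [Finset.mul_prod_erase _ (fun j => (x j).det) (Finset.mem_univ i)]; exact hx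
    rw [bdet, ← Finset.mul_prod_erase _ _ (Finset.mem_univ i)]
    have h1 : (x + l • (E ⟨i, p, p⟩ : BlockAlg 𝔽 k n)) i
        = (x i).updateRow p (x i p + l • Pi.single p 1) := by
      ext r s
      by_cases hr : r = p
      · subst hr
        simp [E, Matrix.single_apply, Pi.single_apply, eq_comm]
      · simp [E, Matrix.updateRow_ne hr, Ne.symm hr]
    have h2 : ∏ j ∈ Finset.univ.erase i, ((x + l • (E ⟨i, p, p⟩ : BlockAlg 𝔽 k n)) j).det
        = ∏ j ∈ Finset.univ.erase i, (x j).det := by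
      refine Finset.prod_congr rfl fun j hj => ?_
      have := Finset.ne_of_mem_erase hj
      simp [E, Pi.single_eq_of_ne this]
    rw [h1, h2, Matrix.det_updateRow_add, Matrix.det_updateRow_smul, Matrix.updateRow_eq_self]
    linear_combination hx'
  have h1 := this 1
  rw [one_smul] at h1
  rw [this 2, h1]
  ring

section core
variable [CharZero 𝔽] (Φ : BlockAlg 𝔽 k n →+ BlockAlg 𝔽 k n)
  (hs : ∀ x, bdet x = 0 → bdet (Φ x) = 0)

/-- linear extension -/
noncomputable def Psi (Φ : BlockAlg 𝔽 k n →+ BlockAlg 𝔽 k n) :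
    BlockAlg 𝔽 k n →ₗ[𝔽] BlockAlg 𝔽 k n where
  toFun x := ∑ a : Σ i : Fin k, Fin (n i) × Fin (n i), x a.1 a.2.1 a.2.2 • Φ (E a)
  map_add' x y := by simp [add_smul, Finset.sum_add_distrib]
  map_smul' c x := by simp [mul_smul, Finset.smul_sum]

omit [CharZero 𝔽] in
theorem Psi_E (a : Σ i : Fin k, Fin (n i) × Fin (n i)) : Psi Φ (E a) = Φ (E a) := by
  change ∑ b : Σ i : Fin k, Fin (n i) × Fin (n i), _ = _
  rw [Finset.sum_eq_single a]
  · simp [E]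
  · rintro ⟨i, p, q⟩ - hb
    obtain ⟨j, r, s⟩ := a
    have : (E ⟨j, r, s⟩ : BlockAlg 𝔽 k n) i p q = 0 := by
      by_cases hij : i = j
      · subst hij
        simp only [E, Pi.single_eq_same, Matrix.single_apply]
        rw [if_neg]
        rintro ⟨rfl, rfl⟩
        exact hb rfl
      · simp [E, hij]
    simp only [this, zero_smul]
  · simp

/-- rational elements -/
noncomputable def iota : BlockAlg ℚ k n →+ BlockAlg 𝔽 k n where
  toFun x i := (x i).map (algebraMap ℚ 𝔽)
  map_zero' := by ext; simp
  map_add' x y := by ext; simp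

theorem bdet_iota (x : BlockAlg ℚ k n) : bdet (iota x : BlockAlg 𝔽 k n) = ((bdet x : ℚ) : 𝔽) := by
  simp only [bdet, Rat.cast_prod]
  refine Finset.prod_congr rfl fun i _ => ?_
  have := RingHom.map_det (algebraMap ℚ 𝔽) (x i)
  simpa [iota] using this.symm

theorem Psi_iota (x : BlockAlg ℚ k n) : Psi Φ (iota x) = Φ (iota x) := by
  conv_rhs => rw [sum_E (iota x), map_sum]
  refine Finset.sum_congr rfl fun a _ => ?_
  have := map_ratCast_smul Φ 𝔽 𝔽 (x a.1 a.2.1 a.2.2) (E a)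
  simpa [iota] using this.symm

include hs

theorem bdet_Psi (x : BlockAlg 𝔽 k n) : bdet (Psi Φ x) = bdet (Φ 1) * bdet x := by
  let τ := Σ i : Fin k, Fin (n i) × Fin (n i)
  let P1 : MvPolynomial τ 𝔽 := ∏ i, Matrix.det (Matrix.of fun p q =>
    ∑ a : τ, MvPolynomial.X a * MvPolynomial.C (Φ (E a) i p q))
  let P2 : MvPolynomial τ 𝔽 := MvPolynomial.C (bdet (Φ 1)) *
    ∏ i, Matrix.det (Matrix.of fun p q => MvPolynomial.X (⟨i, p, q⟩ : τ))
  have e1 : ∀ y : BlockAlg 𝔽 k n, MvPolynomial.eval (fun a : τ => y a.1 a.2.1 a.2.2) P1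
      = bdet (Psi Φ y) := by
    intro y
    simp only [P1, map_prod, bdet]
    refine Finset.prod_congr rfl fun i _ => ?_
    rw [RingHom.map_det]
    congr 1
    ext p q
    simp [Psi, Matrix.sum_apply, τ]
  have e2 : ∀ y : BlockAlg 𝔽 k n, MvPolynomial.eval (fun a : τ => y a.1 a.2.1 a.2.2) P2
      = bdet (Φ 1) * bdet y := by
    intro y
    simp only [P2, map_prod, map_mul, MvPolynomial.eval_C]
    congr 1
    refine Finset.prod_congr rfl fun i _ => ?_
    rw [RingHom.map_det]
    congr 1
    ext p q
    simp
  have hP : P1 = P2 := by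
    apply MvPolynomial.funext_set (fun _ => Set.range fun q : ℚ => (q : 𝔽))
    · intro _
      exact Set.infinite_range_of_injective Rat.cast_injective
    · intro v hv
      simp only [Set.mem_pi, Set.mem_univ, true_imp_iff, Set.mem_range] at hv
      choose w hw using hv
      let y : BlockAlg ℚ k n := fun i p q => w ⟨i, p, q⟩
      have : v = fun a : τ => (iota y : BlockAlg 𝔽 k n) a.1 a.2.1 a.2.2 := by
        ext a
        rw [← hw]
        rfl
      rw [this, e1, e2, Psi_iota, bdet_iota]
      have := F_eq (Φ.comp iota) (fun x hx => hs _ (by rw [bdet_iota, hx]; simp)) y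
      have h1 : (iota (1 : BlockAlg ℚ k n) : BlockAlg 𝔽 k n) = 1 := by
        ext1 i; simp [iota]
      simpa [h1] using this
  rw [← e1, ← e2, hP]

theorem core (h1 : bdet (Φ 1) ≠ 0) (i : Fin k) (p : Fin (n i)) : R1 (Φ (E ⟨i, p, p⟩)) := by
  have hinj : Function.Injective (Psi Φ) := by
    rw [← LinearMap.ker_eq_bot, LinearMap.ker_eq_bot']
    intro K hK
    by_contra hK0
    have hr : blockRank K ≠ 0 := fun h => hK0 (blockRank_eq_zero h)
    obtain ⟨x, c, hc, hx⟩ := compl_block K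
    have ha := hx 0
    have hb := hx 1
    rw [zero_smul, add_zero, zero_pow hr, mul_zero] at ha
    rw [one_smul, one_pow, mul_one] at hb
    have h2 := bdet_Psi Φ hs (x + K)
    rw [map_add, hK, add_zero, bdet_Psi Φ hs, ha, hb, mul_zero] at h2
    exact mul_ne_zero h1 hc h2.symm
  have hsurj : Function.Surjective (Psi Φ) := LinearMap.injective_iff_surjective.1 hinj
  intro y hy
  obtain ⟨x, rfl⟩ := hsurj y
  rw [bdet_Psi Φ hs] at hy
  have hx : bdet x = 0 := (mul_eq_zero.1 hy).resolve_left h1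
  rw [← Psi_E, ← map_smul, ← map_add, ← map_add, bdet_Psi Φ hs, bdet_Psi Φ hs, R1_E i p x hx]
  ring
end core
end BlockProof

namespace BlockProof
variable {𝔽 : Type*} [Field 𝔽] {k : ℕ} {n : Fin k → ℕ}

theorem rank_one_matrix {m : Type*} [Fintype m] [DecidableEq m] {B : Matrix m m 𝔽}
    (hi : B.rank = 1) : ∃ w f : m → 𝔽, B = Matrix.vecMulVec w f := by
  classical
  obtain ⟨P, Q, D, hP, hQ, hb⟩ := pivot B
  rw [hb, Matrix.rank_mul_eq_left_of_isUnit_det _ _ (by simp [hQ]),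
      Matrix.rank_mul_eq_right_of_isUnit_det _ _ (by simp [hP]), Matrix.rank_diagonal,
      Fintype.card_eq_one_iff] at hi
  obtain ⟨⟨r, hr⟩, h⟩ := hi
  have hD : ∀ s, s ≠ r → D s = 0 := by
    intro s hs
    by_contra h0
    exact hs (congrArg Subtype.val (h ⟨s, h0⟩))
  refine ⟨fun i => P i r, fun j => D r * Q r j, ?_⟩
  rw [hb]
  ext i j
  rw [Matrix.mul_apply, Finset.sum_eq_single r]
  · simp [Matrix.vecMulVec_apply, mul_assoc]
  · intro s _ hs
    simp [hD s hs]
  · simp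

theorem rank_one_block {a : BlockAlg 𝔽 k n} (h : blockRank a = 1) :
    ∃ (i : Fin k) (w f : Fin (n i) → 𝔽), w ≠ 0 ∧ a = Pi.single i (Matrix.vecMulVec w f) := by
  have hne : ∃ i, (a i).rank ≠ 0 := by
    by_contra! hc
    simp [blockRank, hc] at h
  obtain ⟨i, hi⟩ := hne
  rw [blockRank, ← Finset.add_sum_erase _ _ (Finset.mem_univ i)] at h
  have h1 : (a i).rank = 1 := by omega
  have h2 : ∑ j ∈ Finset.univ.erase i, (a j).rank = 0 := by omega
  rw [Finset.sum_eq_zero_iff] at h2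
  obtain ⟨w, f, hwf⟩ := rank_one_matrix h1
  refine ⟨i, w, f, ?_, ?_⟩
  · rintro rfl
    rw [hwf] at h1
    simp at h1
  · ext1 j
    by_cases hj : j = i
    · subst hj; simp [hwf]
    · rw [Pi.single_eq_of_ne hj]
      exact rank_zero_matrix (h2 j (by simp [hj]))

theorem conj_matrix {m : Type*} [Fintype m] [DecidableEq m] (w f : m → 𝔽)
    (ht : f ⬝ᵥ w ≠ 0) : ∃ (p : m) (K : Matrix m m 𝔽), K.det ≠ 0 ∧
      K * Matrix.single p p 1 * K⁻¹ = Matrix.vecMulVec w ((f ⬝ᵥ w)⁻¹ • f) := by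
  obtain ⟨p, -, hp⟩ := Finset.exists_ne_zero_of_sum_ne_zero ht
  have hfp : f p ≠ 0 := left_ne_zero_of_mul hp
  let K : Matrix m m 𝔽 := Matrix.of fun r j => if j = p then w r else
    (if r = j then 1 else 0) - (if r = p then f j / f p else 0)
  have hfK : Matrix.vecMul f K = (f ⬝ᵥ w) • Pi.single p 1 := by
    ext j
    by_cases hj : j = p
    · subst hj
      simp [Matrix.vecMul, dotProduct, K]
    · simp [Matrix.vecMul, dotProduct, K, hj, mul_sub, Finset.sum_sub_distrib]
      field_simp
      simp
  have hdet : K.det ≠ 0 := by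
    intro h0
    obtain ⟨x, hx0, hx⟩ := Matrix.exists_mulVec_eq_zero_iff.2 h0
    have h1 : f ⬝ᵥ (K.mulVec x) = 0 := by rw [hx]; simp
    rw [Matrix.dotProduct_mulVec, hfK] at h1
    have hxp : x p = 0 := by simpa [ht] using h1
    apply hx0
    ext j
    by_cases hj : j = p
    · rw [hj, hxp]; rfl
    · have h2 := congrFun hx j
      rw [Matrix.mulVec, dotProduct, Finset.sum_eq_single j] at h2
      · simpa [K, hj] using h2
      · intro l _ hl
        by_cases hlp : l = p
        · subst hlp; simp [hxp]
        · simp [K, hlp, hj, Ne.symm hl]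
      · simp
  refine ⟨p, K, hdet, ?_⟩
  have hu : IsUnit K.det := isUnit_iff_ne_zero.2 hdet
  have : Matrix.vecMulVec w ((f ⬝ᵥ w)⁻¹ • f) * K = K * Matrix.single p p 1 := by
    rw [Matrix.vecMulVec_mul, Matrix.smul_vecMul, hfK, smul_smul, inv_mul_cancel₀ ht, one_smul]
    ext r s
    by_cases hs : s = p
    · subst hs
      simp [Matrix.vecMulVec_apply, K]
    · simp [Matrix.vecMulVec_apply, hs]
  rw [← this, Matrix.mul_nonsing_inv_cancel_right _ _ hu]

section steps
variable [CharZero 𝔽] (Φ : BlockAlg 𝔽 k n →+ BlockAlg 𝔽 k n)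
  (hs : ∀ x, bdet x = 0 → bdet (Φ x) = 0)
include hs

theorem step1 (u : BlockAlg 𝔽 k n) (hu : bdet (Φ u) ≠ 0) (i : Fin k) (w f : Fin (n i) → 𝔽)
    (ht : f ⬝ᵥ w ≠ 0) :
    R1 (Φ (Pi.single i (Matrix.vecMulVec ((u i).mulVec w) ((f ⬝ᵥ w)⁻¹ • f)))) := by
  obtain ⟨p, K, hK, hE⟩ := conj_matrix w f ht
  let g : BlockAlg 𝔽 k n := Pi.mulSingle i K
  let g' : BlockAlg 𝔽 k n := Pi.mulSingle i K⁻¹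
  have hgg : g * g' = 1 := by
    rw [← Pi.mulSingle_mul, Matrix.mul_nonsing_inv _ (isUnit_iff_ne_zero.2 hK)]
    simp
  let Φ2 : BlockAlg 𝔽 k n →+ BlockAlg 𝔽 k n :=
    { toFun := fun x => Φ (u * (g * x * g'))
      map_zero' := by simp
      map_add' := fun x y => by simp [mul_add, add_mul] }
  have h := core Φ2 (fun x hx => hs _ (by simp [bdet_mul, hx]))
    (by change bdet (Φ (u * (g * 1 * g'))) ≠ 0; rw [mul_one, hgg, mul_one]; exact hu) i p
  have e : u * (g * E ⟨i, p, p⟩ * g')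
      = Pi.single i (Matrix.vecMulVec ((u i).mulVec w) ((f ⬝ᵥ w)⁻¹ • f)) := by
    ext1 j
    by_cases hj : j = i
    · subst hj
      simp only [Pi.mul_apply, g, g', E, Pi.mulSingle_eq_same, Pi.single_eq_same]
      rw [hE, Matrix.mul_vecMulVec]
    · simp [E, Pi.single_eq_of_ne hj]
  rw [← e]
  exact h

theorem step2 (u : BlockAlg 𝔽 k n) (hu : bdet (Φ u) ≠ 0) (i : Fin k) (w f : Fin (n i) → 𝔽)
    (ht : f ⬝ᵥ w ≠ 0) :
    R1 (Φ (Pi.single i (Matrix.vecMulVec ((u i).mulVec w) f))) := by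
  set v := (u i).mulVec w with hv
  set a : BlockAlg 𝔽 k n := Pi.single i (Matrix.vecMulVec v f) with ha
  set t := f ⬝ᵥ w with htdef
  have hfin : {s : ℕ | bdet ((s : 𝔽) • Φ a + Φ u) = 0}.Finite := by
    have hne : bpoly (Φ a) (Φ u) ≠ 0 := by
      intro h
      have := bpoly_eval (Φ a) (Φ u) 0
      rw [h] at this
      apply hu
      simpa using this.symm
    refine Set.Finite.of_finite_image (f := fun s : ℕ => (s : 𝔽)) ?_ Nat.cast_injective.injOn
    refine (Polynomial.finite_setOfPred_isRoot hne).subset ?_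
    rintro _ ⟨s, h, rfl⟩
    change Polynomial.eval _ _ = 0
    rw [bpoly_eval]
    exact h
  refine R1.limit (y := Φ (Pi.single i (Matrix.vecMulVec v (t⁻¹ • f)))) hfin.infinite_compl ?_
  intro s hsS
  have hns : ∀ b, Φ ((s : 𝔽) • b) = (s : 𝔽) • Φ b := by
    intro b
    rw [Nat.cast_smul_eq_nsmul, map_nsmul, Nat.cast_smul_eq_nsmul]
  have hU : bdet (Φ (u + (s : 𝔽) • a)) ≠ 0 := by
    rw [map_add, hns, add_comm]
    exact hsS
  have hUw : ((u + (s : 𝔽) • a) i).mulVec w = (1 + s * t) • v := by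
    simp only [Pi.add_apply, Pi.smul_apply, ha, Pi.single_eq_same, Matrix.add_mulVec,
      Matrix.smul_mulVec, Matrix.vecMulVec_mulVec]
    rw [← hv, ← htdef]
    ext r
    simp
    ring
  have hw : w ≠ 0 := by
    rintro rfl
    simp [htdef] at ht
  have h1 : (1 + s * t) ≠ 0 := by
    intro h0
    rw [h0, zero_smul] at hUw
    have h2 := Matrix.exists_mulVec_eq_zero_iff.1 ⟨w, hw, hUw⟩
    exact hU (hs _ (Finset.prod_eq_zero (Finset.mem_univ i) h2))
  have h3 := step1 Φ hs _ hU i ((1 + s * t)⁻¹ • w) f (by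
    rw [dotProduct_smul, ← htdef, smul_eq_mul]; exact mul_ne_zero (inv_ne_zero h1) ht)
  rw [Matrix.mulVec_smul, hUw, smul_smul, inv_mul_cancel₀ h1, one_smul, dotProduct_smul,
    ← htdef] at h3
  have e : (Pi.single i (Matrix.vecMulVec v (((1 + s * t)⁻¹ • t)⁻¹ • f)) : BlockAlg 𝔽 k n)
      = Pi.single i (Matrix.vecMulVec v (t⁻¹ • f)) + (s : 𝔽) • a := by
    rw [ha, ← Pi.single_smul, ← Pi.single_add]
    congr 1
    ext r q
    simp [Matrix.vecMulVec_apply]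
    field_simp
  rw [e, map_add, hns] at h3
  exact h3

theorem step3 (u : BlockAlg 𝔽 k n) (hu : bdet (Φ u) ≠ 0) (i : Fin k) (w f : Fin (n i) → 𝔽)
    (hw : w ≠ 0) :
    R1 (Φ (Pi.single i (Matrix.vecMulVec ((u i).mulVec w) f))) := by
  by_cases ht : f ⬝ᵥ w = 0
  · obtain ⟨r, hr⟩ := Function.ne_iff.1 hw
    let ψ : Fin (n i) → 𝔽 := Pi.single r (w r)⁻¹
    have hψ : ψ ⬝ᵥ w = 1 := by simp [ψ, inv_mul_cancel₀ hr]
    refine R1.limit (S := Set.univ) (y := Φ (Pi.single i (Matrix.vecMulVec ((u i).mulVec w) ψ)))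
      Set.infinite_univ ?_
    intro s _
    have h := step2 Φ hs u hu i w (ψ + (s : 𝔽) • f) (by
      rw [add_dotProduct, hψ, smul_dotProduct, ht]; simp)
    rw [Nat.cast_smul_eq_nsmul, ← map_nsmul, ← map_add, ← Nat.cast_smul_eq_nsmul 𝔽]
    rw [← Pi.single_smul, ← Pi.single_add, ← Matrix.vecMulVec_smul, ← Matrix.vecMulVec_add]
    exact h
  · exact step2 Φ hs u hu i w f ht

end steps
end BlockProof

theorem stmt5 {𝔽 : Type*} [Field 𝔽] [CharZero 𝔽] {k : ℕ} (n : Fin k → ℕ) (hk : 1 ≤ k)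
    (hn : ∀ i, 1 ≤ n i)
    (Φ : BlockAlg 𝔽 k n → BlockAlg 𝔽 k n)
    (hadd : ∀ x y, Φ (x + y) = Φ x + Φ y)
    (hsurj : Function.Surjective Φ)
    (hsing : ∀ a, ¬ IsUnit a → ¬ IsUnit (Φ a)) :
    ∀ a, blockRank a = 1 → blockRank (Φ a) = 1 ∨ Φ a = 0 := by
  intro a ha
  let Φ' : BlockAlg 𝔽 k n →+ BlockAlg 𝔽 k n := AddMonoidHom.mk' Φ hadd
  have hs : ∀ x, BlockProof.bdet x = 0 → BlockProof.bdet (Φ' x) = 0 := by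
    intro x hx
    have := hsing x (by rw [BlockProof.isUnit_iff_bdet]; exact fun h => h hx)
    rw [BlockProof.isUnit_iff_bdet, not_not] at this
    exact this
  obtain ⟨u, hu⟩ := hsurj 1
  have hu1 : BlockProof.bdet (Φ' u) ≠ 0 := by
    change BlockProof.bdet (Φ u) ≠ 0
    rw [hu, BlockProof.bdet_one]
    exact one_ne_zero
  have hu0 : BlockProof.bdet u ≠ 0 := fun h => hu1 (hs u h)
  obtain ⟨i, v, f, hv, rfl⟩ := BlockProof.rank_one_block ha
  have hui : IsUnit (u i).det :=
    isUnit_iff_ne_zero.2 (Finset.prod_ne_zero_iff.1 hu0 i (Finset.mem_univ i))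
  have hw : (u i).mulVec ((u i)⁻¹.mulVec v) = v := by
    rw [Matrix.mulVec_mulVec, Matrix.mul_nonsing_inv _ hui, Matrix.one_mulVec]
  have h := BlockProof.step3 Φ' hs u hu1 i ((u i)⁻¹.mulVec v) f (by
    intro h0
    rw [h0, Matrix.mulVec_zero] at hw
    exact hv hw.symm)
  rw [hw] at h
  exact h.rank
end
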